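/- Let P = c_P z₁^{α₁}z₂^{α₂}z₃^{α₃}, Q = c_Q z₁^{β₁}z₂^{β₂}z₃^{β₃}, R = c_R z₁^{γ₁}z₂^{γ₂}z₃^{γ₃} be monomials with nonzero coefficients c_P, c_Q, c_R ∈ ℂ, with deg P + deg Q = 2·deg R, deg R ≥ 2, and det[[α₁,β₁,γ₁],[α₂,β₂,γ₂],[α₃,β₃,γ₃]] ≠ 0 (holomorphic nondegeneracy). If dim_ℝ g_c = 0, then 6 ≤ dim_ℝ g ≤ 9. Furthermore, there exists such a choice of monomials P, Q, R (with nonzero coefficients, deg P + deg Q = 2·deg R, deg R ≥ 2 and nonzero exponent determinant) for which dim_ℝ g_c = 0 and dim_ℝ g = 9. -/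

import Mathlib

open MvPolynomial Complex

noncomputable section

/-- `Φ(z) = P(z)·conj(Q(z)) + Q(z)·conj(P(z)) + R(z)·conj(R(z))`, so that the model
hypersurface is `M = {(z,w) : Im w = Φ(z)}`. -/
def Phi (P Q R : MvPolynomial (Fin 3) ℂ) (z : Fin 3 → ℂ) : ℂ :=
  eval z P * (starRingEnd ℂ) (eval z Q) + eval z Q * (starRingEnd ℂ) (eval z P) +
    eval z R * (starRingEnd ℂ) (eval z R)

/-- `Φ_j(z) = (∂P/∂z_j)(z)·conj(Q(z)) + (∂Q/∂z_j)(z)·conj(P(z)) + (∂R/∂z_j)(z)·conj(R(z))`. -/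
def PhiD (P Q R : MvPolynomial (Fin 3) ℂ) (j : Fin 3) (z : Fin 3 → ℂ) : ℂ :=
  eval z (pderiv j P) * (starRingEnd ℂ) (eval z Q) +
    eval z (pderiv j Q) * (starRingEnd ℂ) (eval z P) +
    eval z (pderiv j R) * (starRingEnd ℂ) (eval z R)

/-- The monomial `c·z₁^{e₁} z₂^{e₂} z₃^{e₃}`. -/
def mon (c : ℂ) (e : Fin 3 → ℕ) : MvPolynomial (Fin 3) ℂ :=
  C c * X 0 ^ e 0 * X 1 ^ e 1 * X 2 ^ e 2

/-- Total degree of the exponent vector `e`. -/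
def degE (e : Fin 3 → ℕ) : ℕ := e 0 + e 1 + e 2

/-- The determinant of the 3×3 matrix whose columns are the exponent vectors
`a`, `b`, `g` of the three monomials. -/
def edet (a b g : Fin 3 → ℕ) : ℤ :=
  Matrix.det !![(a 0 : ℤ), (b 0 : ℤ), (g 0 : ℤ);
                (a 1 : ℤ), (b 1 : ℤ), (g 1 : ℤ);
                (a 2 : ℤ), (b 2 : ℤ), (g 2 : ℤ)]

/-- The polynomial vector field `Σ F_j ∂/∂z_j + G ∂/∂w` is an infinitesimal CR
automorphism of `M = {Im w = Φ(z)}`. -/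
def IsInfCR (P Q R : MvPolynomial (Fin 3) ℂ)
    (F : Fin 3 → MvPolynomial (Fin 4) ℂ) (G : MvPolynomial (Fin 4) ℂ) : Prop :=
  ∀ (z : Fin 3 → ℂ) (u : ℝ),
    (eval (Fin.snoc z ((u : ℂ) + Complex.I * Phi P Q R z)) G / (2 * Complex.I) -
      ∑ j, eval (Fin.snoc z ((u : ℂ) + Complex.I * Phi P Q R z)) (F j) * PhiD P Q R j z).re = 0

/-- `g_c`: rigid infinitesimal CR automorphisms `Σ f_j(z) ∂/∂z_j` of `M` all of
whose monomials have total degree at least `2` and at most `d`. -/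
def gcSet (P Q R : MvPolynomial (Fin 3) ℂ) (d : ℕ) : Set (Fin 3 → MvPolynomial (Fin 3) ℂ) :=
  {f | (∀ j, ∀ m ∈ (f j).support, 2 ≤ (m.sum fun _ e => e) ∧ (m.sum fun _ e => e) ≤ d) ∧
       ∀ z : Fin 3 → ℂ, (∑ j, eval z (f j) * PhiD P Q R j z).re = 0}

/-- `g`: the real vector space (here, the set) of all polynomial infinitesimal CR
automorphisms of `M`. -/
def gSet (P Q R : MvPolynomial (Fin 3) ℂ) :
    Set ((Fin 3 → MvPolynomial (Fin 4) ℂ) × MvPolynomial (Fin 4) ℂ) :=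
  {Xf | IsInfCR P Q R Xf.1 Xf.2}

open scoped ComplexConjugate

lemma eval_aeval_eq {σ τ : Type*} (v : τ → ℂ) (f : σ → MvPolynomial τ ℂ) (p : MvPolynomial σ ℂ) :
    eval v (aeval f p) = eval (fun i => eval v (f i)) p := by
  rw [← coe_aeval_eq_eval, ← coe_aeval_eq_eval]
  simp only [RingHom.coe_coe]
  rw [← AlgHom.comp_apply, comp_aeval]

lemma eval_map_conj {σ : Type*} (v : σ → ℂ) (p : MvPolynomial σ ℂ) :
    eval v (map (starRingEnd ℂ) p) = conj (eval (fun i => conj (v i)) p) := by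
  induction p using MvPolynomial.induction_on with
  | C a => simp
  | add p q hp hq => simp [hp, hq]
  | mul_X p i hp => simp [hp]

/-- A polynomial in `z`, `z̄` and a real variable that vanishes identically is zero. -/
lemma eval_eq_zero_of_forall_conj (p : MvPolynomial (Fin 3 ⊕ Fin 3 ⊕ Unit) ℂ)
    (h : ∀ (z : Fin 3 → ℂ) (u : ℝ),
      eval (Sum.elim z (Sum.elim (fun i => conj (z i)) fun _ => (u : ℂ))) p = 0)
    (z y : Fin 3 → ℂ) (u : ℂ) : eval (Sum.elim z (Sum.elim y fun _ => u)) p = 0 := by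
  let s : Fin 3 ⊕ Fin 3 ⊕ Unit → MvPolynomial (Fin 3 ⊕ Fin 3 ⊕ Unit) ℂ :=
    Sum.elim (fun i => X (.inl i) + C I * X (.inr (.inl i)))
      (Sum.elim (fun i => X (.inl i) - C I * X (.inr (.inl i))) fun _ => X (.inr (.inr ())))
  have hz : aeval s p = 0 := by
    refine funext_set (fun _ => Set.range ((↑) : ℝ → ℂ))
      (fun _ => Set.infinite_range_of_injective Complex.ofReal_injective) fun x hx => ?_
    choose r hr using fun i => hx i (Set.mem_univ i)
    rw [eval_aeval_eq, map_zero,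
      ← h (fun i => x (.inl i) + I * x (.inr (.inl i))) (r (.inr (.inr ())))]
    congr 2
    ext i
    rcases i with i | i | i
    · simp [s]
    · simp [s, ← hr, sub_eq_add_neg]
    · simp [s, ← hr]
  have h2 := congrArg (eval (Sum.elim (fun i => (z i + y i) / 2)
    (Sum.elim (fun i => (z i - y i) / (2 * I)) fun _ => u))) hz
  rw [eval_aeval_eq, map_zero] at h2
  rw [← h2]
  congr 2
  ext i
  rcases i with i | i | i
  · simp [s]; field_simp; ring
  · simp [s]; field_simp; ring
  · simp [s]

/-- The action of the vector field `Σ F_j ∂/∂z_j` on a polynomial in `z`. -/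
def push (F : Fin 3 → MvPolynomial (Fin 4) ℂ) (p : MvPolynomial (Fin 3) ℂ) :
    MvPolynomial (Fin 4) ℂ :=
  ∑ j, F j * rename Fin.castSucc (pderiv j p)

/-- Evaluation of a polynomial in `(z,w)` at a point. -/
def ev (z : Fin 3 → ℂ) (w : ℂ) : MvPolynomial (Fin 4) ℂ →+* ℂ :=
  eval (Fin.snoc z w : Fin 4 → ℂ)

lemma ev_rename (z : Fin 3 → ℂ) (w : ℂ) (p : MvPolynomial (Fin 3) ℂ) :
    ev z w (rename Fin.castSucc p) = eval z p := by
  rw [ev, eval_rename]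
  congr 2
  ext i
  simp

lemma eval_snoc_aeval {τ : Type*} (v : τ → ℂ) (f : Fin 3 → MvPolynomial τ ℂ)
    (g : MvPolynomial τ ℂ) (p : MvPolynomial (Fin 4) ℂ) :
    eval v (aeval (Fin.snoc f g : Fin 4 → MvPolynomial τ ℂ) p) =
      ev (fun i => eval v (f i)) (eval v g) p := by
  rw [eval_aeval_eq, ev]
  congr 2
  ext i
  refine Fin.lastCases ?_ (fun i => ?_) i <;> simp only [Fin.snoc_last, Fin.snoc_castSucc]

lemma ev_map_conj (z : Fin 3 → ℂ) (w : ℂ) (p : MvPolynomial (Fin 4) ℂ) :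
    ev z w (map (starRingEnd ℂ) p) = conj (ev (fun i => conj (z i)) (conj w) p) := by
  rw [ev, eval_map_conj, ev]
  congr 3
  ext i
  refine Fin.lastCases ?_ (fun i => ?_) i <;> simp only [Fin.snoc_last, Fin.snoc_castSucc]

/-- The polarization of `Φ`. -/
def PhiPol (P Q R : MvPolynomial (Fin 3) ℂ) (z y : Fin 3 → ℂ) : ℂ :=
  eval z P * conj (eval y Q) + eval z Q * conj (eval y P) + eval z R * conj (eval y R)

lemma sum_ev_mul_PhiD (P Q R : MvPolynomial (Fin 3) ℂ) (F : Fin 3 → MvPolynomial (Fin 4) ℂ)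
    (z : Fin 3 → ℂ) (w : ℂ) :
    ∑ j, ev z w (F j) * PhiD P Q R j z =
      ev z w (push F P) * conj (eval z Q) + ev z w (push F Q) * conj (eval z P) +
        ev z w (push F R) * conj (eval z R) := by
  simp only [push, PhiD, map_sum, map_mul, ev_rename, Finset.sum_mul, ← Finset.sum_add_distrib]
  exact Finset.sum_congr rfl fun j _ => by ring

theorem IsInfCR.polarize {P Q R : MvPolynomial (Fin 3) ℂ} {F : Fin 3 → MvPolynomial (Fin 4) ℂ}
    {G : MvPolynomial (Fin 4) ℂ} (h : IsInfCR P Q R F G) (z y : Fin 3 → ℂ) (w t : ℂ)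
    (hwt : w - conj t = 2 * I * PhiPol P Q R z y) :
    (ev z w G - conj (ev y t G)) / (2 * I) =
      ev z w (push F P) * conj (eval y Q) + ev z w (push F Q) * conj (eval y P) +
        ev z w (push F R) * conj (eval y R) +
      (conj (ev y t (push F P)) * eval z Q + conj (ev y t (push F Q)) * eval z P +
        conj (ev y t (push F R)) * eval z R) := by
  let zv : Fin 3 → MvPolynomial (Fin 3 ⊕ Fin 3 ⊕ Unit) ℂ := fun i => X (.inl i)
  let yv : Fin 3 → MvPolynomial (Fin 3 ⊕ Fin 3 ⊕ Unit) ℂ := fun i => X (.inr (.inl i))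
  let uv : MvPolynomial (Fin 3 ⊕ Fin 3 ⊕ Unit) ℂ := X (.inr (.inr ()))
  let hol : MvPolynomial (Fin 3) ℂ → MvPolynomial (Fin 3 ⊕ Fin 3 ⊕ Unit) ℂ := fun p => aeval zv p
  let anti : MvPolynomial (Fin 3) ℂ → MvPolynomial (Fin 3 ⊕ Fin 3 ⊕ Unit) ℂ := fun p =>
    aeval yv (map (starRingEnd ℂ) p)
  let ph : MvPolynomial (Fin 3 ⊕ Fin 3 ⊕ Unit) ℂ :=
    hol P * anti Q + hol Q * anti P + hol R * anti R
  let hol4 : MvPolynomial (Fin 4) ℂ → MvPolynomial (Fin 3 ⊕ Fin 3 ⊕ Unit) ℂ := fun p =>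
    aeval (Fin.snoc zv (uv + C I * ph) : Fin 4 → MvPolynomial (Fin 3 ⊕ Fin 3 ⊕ Unit) ℂ) p
  let anti4 : MvPolynomial (Fin 4) ℂ → MvPolynomial (Fin 3 ⊕ Fin 3 ⊕ Unit) ℂ := fun p =>
    aeval (Fin.snoc yv (uv - C I * ph) : Fin 4 → MvPolynomial (Fin 3 ⊕ Fin 3 ⊕ Unit) ℂ)
      (map (starRingEnd ℂ) p)
  let H : MvPolynomial (Fin 3 ⊕ Fin 3 ⊕ Unit) ℂ := C (1 / (2 * I)) * (hol4 G - anti4 G) -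
    (hol4 (push F P) * anti Q + hol4 (push F Q) * anti P + hol4 (push F R) * anti R +
      (anti4 (push F P) * hol Q + anti4 (push F Q) * hol P + anti4 (push F R) * hol R))
  have hhol : ∀ (z y : Fin 3 → ℂ) (u : ℂ) p,
      eval (Sum.elim z (Sum.elim y fun _ => u)) (hol p) = eval z p := by
    intro z y u p
    simp only [hol, eval_aeval_eq, zv, eval_X, Sum.elim_inl]
  have hanti : ∀ (z y : Fin 3 → ℂ) (u : ℂ) p,
      eval (Sum.elim z (Sum.elim y fun _ => u)) (anti p) =
        conj (eval (fun i => conj (y i)) p) := by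
    intro z y u p
    simp only [anti, eval_aeval_eq, yv, eval_map_conj, eval_X, Sum.elim_inl, Sum.elim_inr]
  have hph : ∀ (z y : Fin 3 → ℂ) (u : ℂ),
      eval (Sum.elim z (Sum.elim y fun _ => u)) ph = PhiPol P Q R z (fun i => conj (y i)) := by
    intro z y u
    simp only [ph, map_add, map_mul, hhol, hanti, PhiPol]
  have hhol4 : ∀ (z y : Fin 3 → ℂ) (u : ℂ) p,
      eval (Sum.elim z (Sum.elim y fun _ => u)) (hol4 p) =
        ev z (u + I * PhiPol P Q R z (fun i => conj (y i))) p := by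
    intro z y u p
    simp only [hol4, eval_snoc_aeval, map_add, map_mul, hph, zv, uv, eval_X, eval_C,
      Sum.elim_inl, Sum.elim_inr]
  have hanti4 : ∀ (z y : Fin 3 → ℂ) (u : ℂ) p,
      eval (Sum.elim z (Sum.elim y fun _ => u)) (anti4 p) =
        conj (ev (fun i => conj (y i))
          (conj (u - I * PhiPol P Q R z (fun i => conj (y i)))) p) := by
    intro z y u p
    simp only [anti4, eval_snoc_aeval, map_sub, map_mul, hph, yv, uv, eval_X,
      eval_C, Sum.elim_inl, Sum.elim_inr]
    rw [ev_map_conj]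
    simp only [map_sub, map_mul]
  have hH := eval_eq_zero_of_forall_conj H (fun z u => by
    have hr := h z u
    have e1 : PhiPol P Q R z z = Phi P Q R z := rfl
    have e2 : conj (Phi P Q R z) = Phi P Q R z := by simp [Phi]; ring
    have e3 : conj ((u : ℂ) - I * Phi P Q R z) = (u : ℂ) + I * Phi P Q R z := by simp [e2]
    have e4 := sum_ev_mul_PhiD P Q R F z ((u : ℂ) + I * Phi P Q R z)
    simp only [H, map_add, map_sub, map_mul, hhol, hanti, hhol4, hanti4, eval_C,
      Complex.conj_conj, e1]
    simp only [← map_mul, ← map_sub, e3]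
    simp only [ev] at e4 ⊢
    rw [e4] at hr
    have h5 := Complex.add_conj
      ((eval (Fin.snoc z ((u : ℂ) + I * Phi P Q R z)) G / (2 * I)) -
      ∑ j, eval (Fin.snoc z ((u : ℂ) + I * Phi P Q R z)) (F j) * PhiD P Q R j z)
    rw [e4, hr] at h5
    simp only [map_sub, map_div₀, map_mul, map_add, Complex.conj_conj, Complex.conj_I,
      map_ofNat, mul_zero, Complex.ofReal_zero] at h5
    rw [← h5]
    have : I ≠ 0 := I_ne_zero
    field_simp
    ring) z (fun i => conj (y i)) (conj t + I * PhiPol P Q R z y)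
  simp only [H, map_add, map_sub, map_mul, hhol, hanti, hhol4, hanti4, eval_C,
      Complex.conj_conj] at hH
  have e1 : conj t + I * PhiPol P Q R z y + I * PhiPol P Q R z y = w := by
    linear_combination -hwt
  have e2 : t + conj I * conj (PhiPol P Q R z y) - conj I * conj (PhiPol P Q R z y) = t := by ring
  rw [e1, e2] at hH
  linear_combination hH

/-- An exponent vector as a finitely supported function. -/
def monExp (e : Fin 3 → ℕ) : Fin 3 →₀ ℕ := Finsupp.equivFunOnFinite.symm e

@[simp] lemma monExp_apply (e : Fin 3 → ℕ) (i : Fin 3) : monExp e i = e i := rfl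

lemma eval_mon (c : ℂ) (e : Fin 3 → ℕ) (z : Fin 3 → ℂ) :
    eval z (mon c e) = c * ∏ i, z i ^ e i := by
  simp [mon, Fin.prod_univ_three, mul_assoc]

lemma mon_eq_monomial (c : ℂ) (e : Fin 3 → ℕ) : mon c e = monomial (monExp e) c := by
  rw [monomial_eq, Finsupp.prod_fintype _ _ (by simp)]
  simp [mon, Fin.prod_univ_three, mul_assoc]

/-- The matrix of exponents, one row for each monomial. -/
def expMat (e : Fin 3 → Fin 3 → ℕ) : Matrix (Fin 3) (Fin 3) ℂ := Matrix.of fun a j => (e a j : ℂ)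

lemma expMat_det (e : Fin 3 → Fin 3 → ℕ) : (expMat e).det = (edet (e 0) (e 1) (e 2) : ℂ) := by
  simp [expMat, edet, Matrix.det_fin_three]
  ring

lemma exp_indep {e : Fin 3 → Fin 3 → ℕ} (hdet : (expMat e).det ≠ 0) (n : Fin 3 → ℤ)
    (h : ∀ j, ∑ a, n a * (e a j : ℤ) = 0) : n = 0 := by
  have : (fun a => (n a : ℂ)) = 0 := by
    refine Matrix.eq_zero_of_vecMul_eq_zero hdet ?_
    ext j
    simpa [Matrix.vecMul, dotProduct, expMat] using congrArg (Int.cast : ℤ → ℂ) (h j)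
  ext a
  simpa using congrFun this a

lemma exp_dual {e : Fin 3 → Fin 3 → ℕ} (hdet : (expMat e).det ≠ 0) (v : Fin 3 → ℂ)
    (h : ∀ a, ∑ j, (e a j : ℂ) * v j = 0) : v = 0 := by
  refine Matrix.eq_zero_of_mulVec_eq_zero hdet ?_
  ext a
  simpa [Matrix.mulVec, dotProduct, expMat] using h a

/-- The substitution of the monomials with exponents `e` for the variables. -/
def monSub (e : Fin 3 → Fin 3 → ℕ) : MvPolynomial (Fin 3) ℂ →ₐ[ℂ] MvPolynomial (Fin 3) ℂ :=
  aeval fun b => monomial (monExp (e b)) 1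

lemma coeff_monSub {e : Fin 3 → Fin 3 → ℕ} (hdet : (expMat e).det ≠ 0) (a : Fin 3)
    (h : MvPolynomial (Fin 3) ℂ) :
    coeff (monExp (e a)) (monSub e h) = coeff (Finsupp.single a 1) h := by
  induction h using MvPolynomial.induction_on' with
  | add p q hp hq => simp [hp, hq]
  | monomial n r =>
    have h1 : monSub e (monomial n r) = monomial (∑ b, n b • monExp (e b)) r := by
      rw [monSub, aeval_monomial, Finsupp.prod_fintype _ _ (by simp)]
      simp only [monomial_pow, one_pow, algebraMap_eq]
      rw [← monomial_sum_one, C_mul_monomial, mul_one]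
    rw [h1, coeff_monomial, coeff_monomial]
    congr 1
    refine propext ⟨fun h2 => ?_, fun h2 => ?_⟩
    · have h3 := exp_indep hdet (fun b => (n b : ℤ) - if b = a then 1 else 0) (fun j => by
        have h4 := congrArg (Nat.cast : ℕ → ℤ) (DFunLike.congr_fun h2 j)
        simp at h4
        simp [sub_mul, h4])
      ext b
      have h5 := congrFun h3 b
      simp only [Pi.zero_apply, sub_eq_zero] at h5
      rw [Finsupp.single_apply]
      rcases eq_or_ne b a with rfl | hb
      · simpa using h5
      · simpa [hb, hb.symm] using h5
    · subst h2
      ext j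
      simp [Finsupp.single_apply]

lemma coeff_single_eq_eval_pderiv (a : Fin 3) (h : MvPolynomial (Fin 3) ℂ) :
    coeff (Finsupp.single a 1) h = eval 0 (pderiv a h) := by
  simp [eval_zero, constantCoeff_eq, coeff_pderiv]

/-- Specialization of the last variable. -/
def specW (w : ℂ) : MvPolynomial (Fin 4) ℂ →ₐ[ℂ] MvPolynomial (Fin 3) ℂ :=
  aeval (Fin.snoc X (C w) : Fin 4 → MvPolynomial (Fin 3) ℂ)

/-- Specialization of the first three variables. -/
def specZ (z : Fin 3 → ℂ) : MvPolynomial (Fin 4) ℂ →ₐ[ℂ] Polynomial ℂ :=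
  aeval (Fin.snoc (fun i => Polynomial.C (z i)) Polynomial.X : Fin 4 → Polynomial ℂ)

lemma eval_specW (z : Fin 3 → ℂ) (w : ℂ) (p : MvPolynomial (Fin 4) ℂ) :
    eval z (specW w p) = ev z w p := by
  rw [specW, eval_snoc_aeval]
  simp

lemma specW_rename (w : ℂ) (p : MvPolynomial (Fin 3) ℂ) :
    specW w (rename Fin.castSucc p) = p :=
  MvPolynomial.funext fun z => by rw [eval_specW, ev_rename]

lemma specW_push (w : ℂ) (F : Fin 3 → MvPolynomial (Fin 4) ℂ) (p : MvPolynomial (Fin 3) ℂ) :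
    specW w (push F p) = ∑ j, specW w (F j) * pderiv j p := by
  simp [push, specW_rename]

lemma eval_specZ (z : Fin 3 → ℂ) (w : ℂ) (p : MvPolynomial (Fin 4) ℂ) :
    (specZ z p).eval w = ev z w p := by
  have : (Polynomial.aeval w).comp (specZ z) = aeval (Fin.snoc z w : Fin 4 → ℂ) := by
    apply MvPolynomial.algHom_ext
    intro i
    refine Fin.lastCases ?_ (fun i => ?_) i <;>
      simp only [specZ, AlgHom.comp_apply, aeval_X, Fin.snoc_last, Fin.snoc_castSucc,
        Polynomial.aeval_X, Polynomial.aeval_C, Algebra.algebraMap_self, RingHom.id_apply]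
  have h2 := AlgHom.congr_fun this p
  simpa [ev, Polynomial.coe_aeval_eq_eval] using h2

lemma eval_poly_aeval (v : Fin 3 → ℂ) (W : MvPolynomial (Fin 3) ℂ) (f : Polynomial ℂ) :
    eval v (Polynomial.aeval W f) = f.eval (eval v W) := by
  have := Polynomial.aeval_algHom_apply (aeval v : MvPolynomial (Fin 3) ℂ →ₐ[ℂ] ℂ) W f
  simpa using this.symm

lemma eval_monSub (e : Fin 3 → Fin 3 → ℕ) (x : Fin 3 → ℂ) (h : MvPolynomial (Fin 3) ℂ) :
    eval x (monSub e h) = eval (fun b => ∏ i, x i ^ e b i) h := by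
  rw [monSub, eval_aeval_eq]
  congr 2
  ext b
  rw [← mon_eq_monomial, eval_mon, one_mul]

/-- The involution of the index set pairing `P` with `Q` and `R` with itself. -/
def sw : Fin 3 → Fin 3 := ![1, 0, 2]

lemma sw_sw (a : Fin 3) : sw (sw a) = a := by fin_cases a <;> rfl

/-- The family of monomials with coefficients `c` and exponents `e`. -/
def mm (c : Fin 3 → ℂ) (e : Fin 3 → Fin 3 → ℕ) (a : Fin 3) : MvPolynomial (Fin 3) ℂ :=
  mon (c a) (e a)

/-- The vector field `(F, G)` is an infinitesimal CR automorphism of the model defined by the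
monomials `mm c e`. -/
def IsCR (c : Fin 3 → ℂ) (e : Fin 3 → Fin 3 → ℕ) (F : Fin 3 → MvPolynomial (Fin 4) ℂ)
    (G : MvPolynomial (Fin 4) ℂ) : Prop :=
  IsInfCR (mm c e 0) (mm c e 1) (mm c e 2) F G

section structure_lemmas

variable {c : Fin 3 → ℂ} {e : Fin 3 → Fin 3 → ℕ} {F : Fin 3 → MvPolynomial (Fin 4) ℂ}
  {G : MvPolynomial (Fin 4) ℂ}

lemma IsCR.polarize (h : IsCR c e F G) (z y : Fin 3 → ℂ) (w t : ℂ)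
    (hwt : w - conj t = 2 * I * ∑ a, eval z (mm c e (sw a)) * conj (eval y (mm c e a))) :
    (ev z w G - conj (ev y t G)) / (2 * I) =
      ∑ a, ev z w (push F (mm c e (sw a))) * conj (eval y (mm c e a)) +
      ∑ a, conj (ev y t (push F (mm c e (sw a)))) * eval z (mm c e a) := by
  have := IsInfCR.polarize h z y w t (by rw [hwt]; simp [PhiPol, Fin.sum_univ_three, sw]; ring)
  rw [this]
  simp [Fin.sum_univ_three, sw]
  ring

/-- For fixed `w`, a CR automorphism acts on each of the monomials by an affine expression in the
monomials, up to a term coming from `∂G/∂w`. -/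
lemma IsCR.exists_push_eq (h : IsCR c e F G) (hc : ∀ a, c a ≠ 0) (hdet : (expMat e).det ≠ 0)
    (τ : ℂ) (a : Fin 3) : ∃ (κ : ℂ) (l : Fin 3 → ℂ), ∀ z,
      ev z τ (push F (mm c e a)) =
        (specZ z G).derivative.eval τ * eval z (mm c e a) + κ + ∑ b, l b * eval z (mm c e b) := by
  obtain ⟨a, rfl⟩ : ∃ a', a = sw a' := ⟨sw a, (sw_sw a).symm⟩
  refine ⟨-(coeff (monExp (e a)) (C (1 / (2 * I)) * specW τ (map (starRingEnd ℂ) G))) / conj (c a),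
    fun b => -(coeff (monExp (e a)) (specW τ (map (starRingEnd ℂ) (push F (mm c e (sw b)))))) /
      conj (c a), fun z => ?_⟩
  let L : MvPolynomial (Fin 3) ℂ := ∑ b, C (eval z (mm c e (sw b)) * conj (c b)) * X b
  let W : MvPolynomial (Fin 3) ℂ := C τ + C (2 * I) * L
  let H : MvPolynomial (Fin 3) ℂ := C (1 / (2 * I)) * Polynomial.aeval W (specZ z G) -
    ∑ b, Polynomial.aeval W (specZ z (push F (mm c e (sw b)))) * (C (conj (c b)) * X b)
  have hconj : ∀ (x : Fin 3 → ℂ) b,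
      conj (eval (fun i => conj (x i)) (mm c e b)) = conj (c b) * ∏ i, x i ^ e b i := by
    intro x b
    simp [mm, eval_mon]
  have key : monSub e H = C (1 / (2 * I)) * specW τ (map (starRingEnd ℂ) G) +
      ∑ b, C (eval z (mm c e b)) * specW τ (map (starRingEnd ℂ) (push F (mm c e (sw b)))) := by
    refine MvPolynomial.funext fun x => ?_
    have hL : eval (fun b => ∏ i, x i ^ e b i) L =
        ∑ a, eval z (mm c e (sw a)) * conj (eval (fun i => conj (x i)) (mm c e a)) := by
      simp only [L, map_sum, map_mul, eval_C, eval_X, hconj, mul_assoc]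
    have hp := h.polarize z (fun i => conj (x i))
      (τ + 2 * I * eval (fun b => ∏ i, x i ^ e b i) L) (conj τ) (by rw [hL, conj_conj]; ring)
    rw [eval_monSub]
    simp only [H, map_sub, map_sum, map_mul, map_add, eval_C, eval_X, eval_poly_aeval, eval_specZ,
      eval_specW, ev_map_conj, W]
    simp only [hconj] at hp
    simp only [mul_comm (eval z (mm c e _)) (conj _)]
    linear_combination hp
  have hcoef := congrArg (coeff (monExp (e a))) key
  have hL0 : eval 0 L = 0 := by simp [L]
  have hW0 : eval 0 W = τ := by simp only [W, map_add, map_mul, hL0, eval_C]; ring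
  have hdL : pderiv a L = C (eval z (mm c e (sw a)) * conj (c a)) := by
    simp [L, pderiv_X, Pi.single_apply, Derivation.leibniz]
  have hdW : eval 0 (pderiv a W) = 2 * I * (eval z (mm c e (sw a)) * conj (c a)) := by
    simp only [W, map_add, Derivation.leibniz, pderiv_C, hdL, smul_eq_mul, map_mul, eval_C]
    simp
  rw [coeff_monSub hdet, coeff_single_eq_eval_pderiv, coeff_add, coeff_sum] at hcoef
  simp only [H, map_sub, map_sum, Derivation.leibniz, pderiv_C, pderiv_X, Derivation.map_aeval,
    smul_eq_mul, map_add, map_mul, eval_C, eval_X, eval_poly_aeval, hW0, hdW, coeff_C_mul] at hcoef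
  have hs : ∀ b, eval (0 : Fin 3 → ℂ) (Pi.single (M := fun _ => MvPolynomial (Fin 3) ℂ) a 1 b) =
      if b = a then 1 else 0 := by
    intro b
    rcases eq_or_ne b a with rfl | hb <;> simp [*]
  simp only [hs, map_zero, mul_zero, add_zero, Pi.zero_apply, zero_mul, mul_ite, mul_one,
    Finset.sum_ite_eq', Finset.mem_univ, if_true, eval_specZ] at hcoef
  have hca : conj (c a) ≠ 0 := by simpa using hc a
  simp only [div_mul_eq_mul_div, ← Finset.sum_div, neg_mul, Finset.sum_neg_distrib, coeff_C_mul]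
  have : I ≠ 0 := I_ne_zero
  field_simp at hcoef ⊢
  simp only [mul_comm (eval z (mm c e _)) (coeff _ _)] at hcoef ⊢
  linear_combination -hcoef

end structure_lemmas

lemma mm_eq_monomial (c : Fin 3 → ℂ) (e : Fin 3 → Fin 3 → ℕ) (a : Fin 3) :
    mm c e a = monomial (monExp (e a)) (c a) := mon_eq_monomial _ _

/-- The coefficients of the derivative of a monomial along a polynomial vector field. -/
lemma coeff_sum_mul_pderiv_mon (f : Fin 3 → MvPolynomial (Fin 3) ℂ) (c : ℂ) (e : Fin 3 → ℕ)
    (m : Fin 3 →₀ ℕ) :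
    coeff m (∑ j, f j * pderiv j (mon c e)) =
      ∑ j, if monExp e - Finsupp.single j 1 ≤ m then
        coeff (m - (monExp e - Finsupp.single j 1)) (f j) * (c * e j) else 0 := by
  simp only [mon_eq_monomial, pderiv_monomial, coeff_sum, coeff_mul_monomial', monExp_apply]

lemma coeff_sum_mul_pderiv_mon_of_eq_zero (f : Fin 3 → MvPolynomial (Fin 3) ℂ) (c : ℂ)
    (e : Fin 3 → ℕ) (k : Fin 3) (n : Fin 3 →₀ ℕ) (hk : 0 < e k) (hn : n k = 0) :
    coeff (monExp e - Finsupp.single k 1 + n) (∑ j, f j * pderiv j (mon c e)) =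
      coeff n (f k) * (c * e k) := by
  rw [coeff_sum_mul_pderiv_mon, Finset.sum_eq_single k]
  · rw [if_pos le_self_add, add_tsub_cancel_left]
  · intro j _ hj
    rw [if_neg]
    intro hle
    have := hle k
    simp [hj, hn] at this
    omega
  · simp

lemma exists_of_coeff_sum_mul_pderiv_mon_ne_zero {f : Fin 3 → MvPolynomial (Fin 3) ℂ} {c : ℂ}
    {e : Fin 3 → ℕ} {m : Fin 3 →₀ ℕ} (h : coeff m (∑ j, f j * pderiv j (mon c e)) ≠ 0) :
    ∃ k n, 0 < e k ∧ m = monExp e - Finsupp.single k 1 + n ∧ coeff n (f k) ≠ 0 := by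
  rw [coeff_sum_mul_pderiv_mon] at h
  obtain ⟨k, -, hk⟩ := Finset.exists_ne_zero_of_sum_ne_zero h
  split_ifs at hk with hle
  · refine ⟨k, _, ?_, (add_tsub_cancel_of_le hle).symm, left_ne_zero_of_mul hk⟩
    rcases Nat.eq_zero_or_pos (e k) with h0 | h0
    · simp [h0] at hk
    · exact h0
  · exact absurd rfl hk

lemma ev_zero_push_mon (F : Fin 3 → MvPolynomial (Fin 4) ℂ) (c : ℂ) (e : Fin 3 → ℕ)
    (he : 2 ≤ degE e) (w : ℂ) : ev 0 w (push F (mon c e)) = 0 := by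
  rw [← eval_specW, specW_push, eval_zero, constantCoeff_eq]
  by_contra h
  obtain ⟨k, n, -, h1, -⟩ := exists_of_coeff_sum_mul_pderiv_mon_ne_zero h
  have h2 := fun i => DFunLike.congr_fun h1 i
  simp only [Finsupp.add_apply, Finsupp.tsub_apply, monExp_apply, Finsupp.coe_zero, Pi.zero_apply,
    Finsupp.single_apply] at h2
  have h0 := h2 0
  have h1 := h2 1
  have h2 := h2 2
  unfold degE at he
  fin_cases k <;> simp at h0 h1 h2 <;> omega

section structure_lemmas

variable {c : Fin 3 → ℂ} {e : Fin 3 → Fin 3 → ℕ} {F : Fin 3 → MvPolynomial (Fin 4) ℂ}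
  {G : MvPolynomial (Fin 4) ℂ}

lemma exp_ne_zero (hdet : (expMat e).det ≠ 0) (a : Fin 3) : ∃ j, e a j ≠ 0 := by
  by_contra! h
  have := congrFun (exp_indep hdet (Pi.single a 1) (fun j => by simp [Pi.single_apply, h])) a
  simp at this

lemma degE_pos (hdet : (expMat e).det ≠ 0) (a : Fin 3) : 0 < degE (e a) := by
  obtain ⟨j, hj⟩ := exp_ne_zero hdet a
  unfold degE
  fin_cases j <;> simp at hj <;> omega

lemma eval_zero_mm (hdet : (expMat e).det ≠ 0) (a : Fin 3) : eval 0 (mm c e a) = 0 := by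
  obtain ⟨j, hj⟩ := exp_ne_zero hdet a
  rw [mm, eval_mon, Finset.prod_eq_zero (Finset.mem_univ j) (by simp [hj]), mul_zero]

lemma exists_eval_mm_eq (hc : ∀ a, c a ≠ 0) (hdet : (expMat e).det ≠ 0) (t : Fin 3 → ℂ)
    (ht : ∀ a, t a ≠ 0) : ∃ z, ∀ a, eval z (mm c e a) = t a := by
  let v : Fin 3 → ℂ := (expMat e)⁻¹.mulVec fun a => Complex.log (t a / c a)
  have hv : (expMat e).mulVec v = fun a => Complex.log (t a / c a) := by
    rw [Matrix.mulVec_mulVec, Matrix.mul_nonsing_inv _ (isUnit_iff_ne_zero.mpr hdet),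
      Matrix.one_mulVec]
  refine ⟨fun j => Complex.exp (v j), fun a => ?_⟩
  have h1 := congrFun hv a
  simp only [Matrix.mulVec, dotProduct, expMat, Matrix.of_apply] at h1
  rw [mm, eval_mon]
  simp only [← Complex.exp_nat_mul]
  rw [← Complex.exp_sum, h1, Complex.exp_log (div_ne_zero (ht a) (hc a)),
    mul_div_cancel₀ _ (hc a)]

lemma IsCR.ev_eq (h : IsCR c e F G) (hdet : (expMat e).det ≠ 0) (z : Fin 3 → ℂ) (w : ℂ) :
    ev z w G = conj (ev 0 (conj w) G) +
      2 * I * ∑ a, conj (ev 0 (conj w) (push F (mm c e (sw a)))) * eval z (mm c e a) := by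
  have := h.polarize z 0 w (conj w) (by simp [eval_zero_mm hdet, -eval_zero])
  simp only [eval_zero_mm hdet, map_zero, mul_zero, Finset.sum_const_zero, zero_add] at this
  rw [div_eq_iff (by simp)] at this
  linear_combination this

lemma IsCR.exists_derivative_eq (h : IsCR c e F G) (hdet : (expMat e).det ≠ 0) (τ : ℂ) :
    ∃ (δ₀ : ℂ) (δ : Fin 3 → ℂ), ∀ z,
      (specZ z G).derivative.eval τ = δ₀ + ∑ a, δ a * eval z (mm c e a) := by
  let A : Polynomial ℂ := specZ 0 (map (starRingEnd ℂ) G)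
  let B : Fin 3 → Polynomial ℂ := fun a => specZ 0 (map (starRingEnd ℂ) (push F (mm c e (sw a))))
  refine ⟨A.derivative.eval τ, fun a => 2 * I * (B a).derivative.eval τ, fun z => ?_⟩
  have : specZ z G = A + ∑ a, Polynomial.C (2 * I * eval z (mm c e a)) * B a := by
    refine Polynomial.funext fun w => ?_
    have h0 : (fun i => conj ((0 : Fin 3 → ℂ) i)) = 0 := by ext; simp
    simp only [A, B, Polynomial.eval_add, Polynomial.eval_finsetSum, Polynomial.eval_mul,
      Polynomial.eval_C, eval_specZ, ev_map_conj, h0]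
    rw [h.ev_eq hdet, Finset.mul_sum]
    congr 1
    exact Finset.sum_congr rfl fun a _ => by ring
  rw [this]
  simp only [Polynomial.derivative_add, Polynomial.derivative_sum, Polynomial.derivative_C_mul,
    Polynomial.eval_add, Polynomial.eval_finsetSum, Polynomial.eval_mul, Polynomial.eval_C]
  congr 1
  exact Finset.sum_congr rfl fun a _ => by ring

/-- If `P` is linear in a variable occurring in another monomial, the corresponding component of a
CR automorphism vanishes at the origin. -/
lemma IsCR.ev_zero_eq_zero (h : IsCR c e F G) (hc : ∀ a, c a ≠ 0) (hdet : (expMat e).det ≠ 0)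
    {a b j : Fin 3} (hab : a ≠ b) (ha : e a = Pi.single j 1) (hb : 2 ≤ degE (e b))
    (hj : 0 < e b j) (τ : ℂ) : ev 0 τ (F j) = 0 := by
  obtain ⟨κ, l, h1⟩ := h.exists_push_eq hc hdet τ b
  obtain ⟨δ₀, δ, h2⟩ := h.exists_derivative_eq hdet τ
  have h3 : ∑ k, specW τ (F k) * pderiv k (mon (c b) (e b)) =
      (C δ₀ + ∑ a, C (δ a) * mm c e a) * mm c e b + C κ + ∑ a, C (l a) * mm c e a := by
    rw [← specW_push]
    refine MvPolynomial.funext fun z => ?_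
    rw [eval_specW]
    change ev z τ (push F (mm c e b)) = _
    rw [h1 z, h2 z]
    simp
  have h4 := congrArg (coeff (monExp (e b) - Finsupp.single j 1 + 0)) h3
  rw [coeff_sum_mul_pderiv_mon_of_eq_zero _ _ _ _ _ hj (by simp)] at h4
  have hm : ∀ d, monExp (e d) ≠ monExp (e b) - Finsupp.single j 1 := by
    intro d hd
    have hd' : ∀ i, (e d i : ℤ) = e b i - e a i := by
      intro i
      have := DFunLike.congr_fun hd i
      simp only [monExp_apply, Finsupp.tsub_apply, Finsupp.single_apply] at this
      rw [ha, Pi.single_apply]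
      rcases eq_or_ne i j with rfl | hi
      · simp at this ⊢; omega
      · simp [hi, hi.symm] at this ⊢; omega
    have h5 := exp_indep hdet (Pi.single d 1 + Pi.single a 1 - Pi.single b 1) (fun i => by
      simp [Pi.single_apply, add_mul, sub_mul, Finset.sum_add_distrib, hd'])
    have h6 := congrFun h5 a
    have h7 := congrFun h5 d
    simp [Pi.single_apply, hab] at h6 h7
    split_ifs at h6 h7 <;> simp at h6 h7
  have hm0 : (0 : Fin 3 →₀ ℕ) ≠ monExp (e b) - Finsupp.single j 1 := by
    intro hd
    have := fun i => DFunLike.congr_fun hd i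
    simp only [monExp_apply, Finsupp.tsub_apply, Finsupp.single_apply, Finsupp.coe_zero,
      Pi.zero_apply] at this
    have h0 := this 0
    have h1 := this 1
    have h2 := this 2
    unfold degE at hb
    fin_cases j <;> simp at h0 h1 h2 <;> omega
  have hm2 : ¬ monExp (e b) ≤ monExp (e b) - Finsupp.single j 1 := by
    intro hd
    have := hd j
    simp at this
    omega
  rw [add_zero] at h4
  simp only [coeff_add, coeff_sum, coeff_C_mul, coeff_C, mm_eq_monomial, coeff_monomial, hm, hm0,
    if_false, mul_zero, Finset.sum_const_zero, add_zero] at h4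
  rw [coeff_mul_monomial', if_neg hm2] at h4
  rw [← eval_specW, eval_zero, constantCoeff_eq]
  refine (mul_eq_zero.mp h4).resolve_right (mul_ne_zero (hc b) ?_)
  exact_mod_cast hj.ne'

lemma ev_zero_push_of_linear {a j : Fin 3} (ha : e a = Pi.single j 1) (τ : ℂ)
    (h0 : ev 0 τ (F j) = 0) : ev 0 τ (push F (mm c e a)) = 0 := by
  rw [push, map_sum]
  refine Finset.sum_eq_zero fun k _ => ?_
  rw [map_mul, ev_rename]
  rcases eq_or_ne k j with rfl | hk
  · simp [h0]
  · rw [mm_eq_monomial, pderiv_monomial]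
    simp [ha, hk]

end structure_lemmas

/-- Solutions of the functional equation satisfied by the diagonal coefficients. -/
lemma diag_functional_eq {K N Γ : ℂ → ℂ} (h : ∀ w τ, (K w + N τ) * (w - τ) = Γ w - Γ τ) (w : ℂ) :
    K w = K 0 + (K 1 - K 0) * w ∧
      Γ w = Γ 0 + (K 0 + N 0) * w + (K 1 - K 0) * w ^ 2 := by
  have e3 : K 1 + N 0 = K 0 + N 1 := by linear_combination h 1 0 + h 0 1
  have key : K w = K 0 + (K 1 - K 0) * w := by
    linear_combination h w 0 - h 1 0 - h w 1 - (w - 1) * e3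
  refine ⟨key, ?_⟩
  linear_combination -h w 0 + w * key

/-- A bilinear form that is constant on a quadric `∑ Z_a ζ_a = x` inside the torus is diagonal. -/
lemma bilin_eq_of_quadric {S : Fin 3 → Fin 3 → ℂ} {x γ : ℂ}
    (h : ∀ Z ζ : Fin 3 → ℂ, (∀ a, Z a ≠ 0) → (∀ a, ζ a ≠ 0) → ∑ a, Z a * ζ a = x →
      ∑ a, ∑ b, S a b * Z b * ζ a = γ) :
    (∀ a b, a ≠ b → S a b = 0) ∧ ∀ a, S a a * x = γ := by
  have hp : ∀ p q s t : ℂ, p ≠ 0 → q ≠ 0 → s ≠ 0 → t ≠ 0 → x - p - q ≠ 0 →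
      S 0 0 * p + S 0 1 * s * p + S 0 2 * t * p + S 1 0 * q / s + S 1 1 * q + S 1 2 * t * q / s
      + S 2 0 * (x - p - q) / t + S 2 1 * s * (x - p - q) / t + S 2 2 * (x - p - q) = γ := by
    intro p q s t h1 h2 h3 h4 h5
    have := h ![1, s, t] ![p, q / s, (x - p - q) / t]
      (by intro a; fin_cases a <;> simp [*]) (by intro a; fin_cases a <;> simp [*])
      (by simp [Fin.sum_univ_three]; field_simp; ring)
    rw [← this]
    simp [Fin.sum_univ_three]
    field_simp
    ring
  obtain ⟨ε, hε, hx2, hx3⟩ : ∃ ε : ℂ, ε ≠ 0 ∧ x - 2 * ε ≠ 0 ∧ x - 3 * ε ≠ 0 := by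
    by_cases hx : x = 2 ∨ x = 3
    · refine ⟨-1, by simp, ?_, ?_⟩ <;> rcases hx with rfl | rfl <;> norm_num
    · rw [not_or] at hx
      exact ⟨1, one_ne_zero, by simpa [sub_eq_zero] using hx.1, by simpa [sub_eq_zero] using hx.2⟩
  have hl : ∀ p q : ℂ, p ≠ 0 → q ≠ 0 → x - p - q ≠ 0 →
      (S 0 1 * p = 0 ∧ S 0 2 * p = 0 ∧ S 1 0 * q = 0 ∧ S 1 2 * q = 0 ∧ S 2 0 * (x - p - q) = 0 ∧
        S 2 1 * (x - p - q) = 0) ∧ S 0 0 * p + S 1 1 * q + S 2 2 * (x - p - q) = γ := by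
    intro p q h1 h2 h3
    have k := fun s t hs ht => hp p q s t h1 h2 hs ht h3
    have k1 := k 1 1 (by norm_num) (by norm_num)
    have k2 := k (-1) 1 (by norm_num) (by norm_num)
    have k3 := k 1 (-1) (by norm_num) (by norm_num)
    have k4 := k (-1) (-1) (by norm_num) (by norm_num)
    have k5 := k 2 1 (by norm_num) (by norm_num)
    have k6 := k 1 2 (by norm_num) (by norm_num)
    have k7 := k 2 (-1) (by norm_num) (by norm_num)
    refine ⟨⟨?_, ?_, ?_, ?_, ?_, ?_⟩, ?_⟩
    · linear_combination (-1/4) * k1 - 1/12 * k2 - 1/4 * k3 - 1/12 * k4 + 1/3 * k5 + 1/3 * k7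
    · linear_combination - k1 + 1/6 * k2 + 1/3 * k3 - 1/6 * k4 + 1/3 * k5 + 2/3 * k6 - 1/3 * k7
    · linear_combination 1/2 * k1 - 1/6 * k2 + 1/2 * k3 - 1/6 * k4 - 1/3 * k5 - 1/3 * k7
    · linear_combination 1/2 * k1 - 1/6 * k2 - 1/2 * k3 + 1/6 * k4 - 1/3 * k5 + 1/3 * k7
    · linear_combination 5/4 * k1 + 1/12 * k2 - 7/12 * k3 - 1/12 * k4 - 1/3 * k5 - 2/3 * k6 +
        1/3 * k7
    · linear_combination (-1/4) * k1 - 1/12 * k2 + 1/4 * k3 + 1/12 * k4 + 1/3 * k5 - 1/3 * k7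
    · linear_combination 1/4 * k1 + 1/4 * k2 + 1/4 * k3 + 1/4 * k4
  have hx2' : x - ε - ε ≠ 0 := by convert hx2 using 1; ring
  obtain ⟨⟨a1, a2, a3, a4, a5, a6⟩, a7⟩ := hl ε ε hε hε hx2'
  have b7 := (hl (2 * ε) ε (by simpa) hε (by convert hx3 using 1; ring)).2
  have c7 := (hl ε (2 * ε) hε (by simpa) (by convert hx3 using 1; ring)).2
  simp only [mul_eq_zero, hε, hx2', or_false] at a1 a2 a3 a4 a5 a6
  have h02 : S 0 0 = S 2 2 := mul_right_cancel₀ hε (by linear_combination b7 - a7)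
  have h12 : S 1 1 = S 2 2 := mul_right_cancel₀ hε (by linear_combination c7 - a7)
  have hx : S 2 2 * x = γ := by linear_combination a7 - ε * h02 - ε * h12
  constructor
  · intro a b hab
    fin_cases a <;> fin_cases b <;> first | exact absurd rfl hab | assumption
  · intro a
    fin_cases a
    · simpa [h02] using hx
    · simpa [h12] using hx
    · simpa using hx

section structure_lemmas

variable {c : Fin 3 → ℂ} {e : Fin 3 → Fin 3 → ℕ} {F : Fin 3 → MvPolynomial (Fin 4) ℂ}
  {G : MvPolynomial (Fin 4) ℂ}

/-- A vector field preserving the origin is described by three real numbers and a matrix. -/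
def IsNormal (c : Fin 3 → ℂ) (e : Fin 3 → Fin 3 → ℕ) (F : Fin 3 → MvPolynomial (Fin 4) ℂ)
    (G : MvPolynomial (Fin 4) ℂ) (g0 g1 g2 : ℝ) (M : Fin 3 → Fin 3 → ℂ) : Prop :=
  (∀ z w, ev z w G = g0 + g1 * w + g2 * w ^ 2) ∧
  (∀ z w a, ev z w (push F (mm c e a)) =
    g2 * w * eval z (mm c e a) + ∑ b, M a b * eval z (mm c e b)) ∧
  ∀ a b, M a b + conj (M (sw b) (sw a)) = if a = b then (g1 : ℂ) else 0

lemma sum_sw (f : Fin 3 → ℂ) : ∑ a, f (sw a) = ∑ a, f a := by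
  simp [Fin.sum_univ_three, sw]; ring

theorem IsCR.isNormal (h : IsCR c e F G) (hc : ∀ a, c a ≠ 0) (hdet : (expMat e).det ≠ 0)
    (h0 : ∀ a τ, ev 0 τ (push F (mm c e a)) = 0) :
    ∃ (g0 g1 g2 : ℝ) (M : Fin 3 → Fin 3 → ℂ), IsNormal c e F G g0 g1 g2 M := by
  have hG : ∀ z w, ev z w G = conj (ev 0 (conj w) G) := by
    intro z w
    rw [h.ev_eq hdet]
    simp [h0]
  have hG0 : ∀ z w, ev z w G = ev 0 w G := fun z w => by rw [hG z, ← hG 0]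
  have hsp : ∀ z, specZ z G = specZ 0 G := fun z =>
    Polynomial.funext fun w => by rw [eval_specZ, eval_specZ, hG0]
  have hL : ∀ τ a, ∃ l : Fin 3 → ℂ, ∀ z, ev z τ (push F (mm c e a)) =
      ∑ b, l b * eval z (mm c e b) := by
    intro τ a
    obtain ⟨κ, l, hl⟩ := h.exists_push_eq hc hdet τ a
    have hκ : κ = 0 := by
      have := hl 0
      simp only [h0, eval_zero_mm hdet, mul_zero, Finset.sum_const_zero] at this
      simpa using this.symm
    refine ⟨fun b => l b + if a = b then (specZ 0 G).derivative.eval τ else 0, fun z => ?_⟩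
    rw [hl, hκ, hsp]
    simp [add_mul, Finset.sum_add_distrib, add_comm]
  choose L hL using hL
  have hS : ∀ w τ, (∀ a b, a ≠ b → L w a b + conj (L (conj τ) (sw b) (sw a)) = 0) ∧
      ∀ a, (L w a a + conj (L (conj τ) (sw a) (sw a))) * ((w - τ) / (2 * I)) =
        (ev 0 w G - ev 0 τ G) / (2 * I) := by
    intro w τ
    refine bilin_eq_of_quadric (S := fun a b => L w a b + conj (L (conj τ) (sw b) (sw a)))
      fun Z ζ hZ hζ hx => ?_
    obtain ⟨z, hz⟩ := exists_eval_mm_eq (c := c) hc hdet Z hZ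
    obtain ⟨y, hy⟩ := exists_eval_mm_eq (c := c) hc hdet (fun a => conj (ζ (sw a)))
      (fun a => by simpa using hζ (sw a))
    have hp := h.polarize z y w (conj τ) (by
      simp only [hz, hy, conj_conj]
      rw [sum_sw (fun a => Z a * ζ a), hx]
      have : I ≠ 0 := I_ne_zero
      field_simp)
    simp only [hL, hz, hy, conj_conj, map_sum, map_mul] at hp
    rw [hG y, hG0 z, conj_conj, conj_conj] at hp
    rw [hp]
    simp [Fin.sum_univ_three, sw]
    ring
  have h2I : (2 * I : ℂ) ≠ 0 := by simp
  have hdiag := fun a => diag_functional_eq (K := fun w => L w a a)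
    (N := fun τ => conj (L (conj τ) (sw a) (sw a))) (Γ := fun w => ev 0 w G) (fun w τ => by
      have := (hS w τ).2 a
      field_simp at this
      exact this)
  have hoff : ∀ w a b, a ≠ b → L w a b = L 0 a b := by
    intro w a b hab
    have h1 := (hS w 0).1 a b hab
    have h2 := (hS 0 0).1 a b hab
    linear_combination h1 - h2
  have hre : ∀ r : ℝ, ((ev 0 r G).re : ℂ) = ev 0 r G := fun r => by
    rw [← Complex.conj_eq_iff_re]
    simpa using (hG 0 r).symm
  obtain ⟨r0, hr0⟩ : ∃ r : ℝ, (r : ℂ) = ev 0 0 G := ⟨_, by simpa using hre 0⟩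
  obtain ⟨r1, hr1⟩ : ∃ r : ℝ, (r : ℂ) = ev 0 1 G := ⟨_, by simpa using hre 1⟩
  obtain ⟨r2, hr2⟩ : ∃ r : ℝ, (r : ℂ) = ev 0 (-1) G := ⟨_, by simpa using hre (-1)⟩
  have hA : ∀ a, L 0 a a + conj (L 0 (sw a) (sw a)) = ((r1 - r2) / 2 : ℝ) := fun a => by
    have h1 := (hdiag a 1).2
    have h2 := (hdiag a (-1)).2
    push_cast
    rw [hr1, hr2]
    simp only [map_zero] at h1 h2
    linear_combination (h2 - h1) / 2
  have hB : ∀ a, L 1 a a - L 0 a a = ((r1 + r2) / 2 - r0 : ℝ) := fun a => by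
    have h1 := (hdiag a 1).2
    have h2 := (hdiag a (-1)).2
    push_cast
    rw [hr0, hr1, hr2]
    simp only [map_zero] at h1 h2
    linear_combination -(h2 + h1) / 2
  refine ⟨r0, (r1 - r2) / 2, (r1 + r2) / 2 - r0, L 0, fun z w => ?_, fun z w a => ?_,
    fun a b => ?_⟩
  · have := (hdiag 2 w).2
    simp only [map_zero] at this
    rw [hG0, this, hA, hB, hr0]
  · rw [hL, ← hB a]
    have : ∀ b, L w a b = L 0 a b + if a = b then (L 1 a a - L 0 a a) * w else 0 := by
      intro b
      split_ifs with hab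
      · subst hab
        exact (hdiag a w).1
      · rw [hoff w a b hab, add_zero]
    simp only [this, add_mul, Finset.sum_add_distrib, ite_mul, zero_mul, Finset.sum_ite_eq,
      Finset.mem_univ, if_true]
    ring
  · split_ifs with hab
    · subst hab
      exact hA a
    · simpa using (hS 0 0).1 a b hab

end structure_lemmas

/-- Pairs `(F, G)`, that is, polynomial vector fields in `(z, w)`. -/
abbrev VF : Type := (Fin 3 → MvPolynomial (Fin 4) ℂ) × MvPolynomial (Fin 4) ℂ

lemma eq_of_ev_eq {p q : MvPolynomial (Fin 4) ℂ} (h : ∀ z w, ev z w p = ev z w q) : p = q :=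
  MvPolynomial.funext fun v => by
    have := h (Fin.init v) (v (Fin.last 3))
    rwa [ev, Fin.snoc_init_self] at this

lemma real_smul_eq {σ : Type*} (r : ℝ) (p : MvPolynomial σ ℂ) : r • p = C (r : ℂ) * p := by
  ext m
  simp [coeff_smul, coeff_C_mul]

lemma push_add (F F' : Fin 3 → MvPolynomial (Fin 4) ℂ) (p : MvPolynomial (Fin 3) ℂ) :
    push (F + F') p = push F p + push F' p := by
  simp [push, add_mul, Finset.sum_add_distrib]

lemma push_smul (r : ℝ) (F : Fin 3 → MvPolynomial (Fin 4) ℂ) (p : MvPolynomial (Fin 3) ℂ) :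
    push (r • F) p = r • push F p := by
  simp [push, Finset.smul_sum]

/-- The infinitesimal CR automorphisms form a real vector space. -/
def gSub (P Q R : MvPolynomial (Fin 3) ℂ) : Submodule ℝ VF where
  carrier := gSet P Q R
  zero_mem' := fun z u => by simp
  add_mem' := by
    intro X Y hX hY z u
    have h1 := hX z u
    have h2 := hY z u
    rw [← add_zero (0 : ℝ)]
    nth_rewrite 1 [← h1]
    rw [← h2, ← Complex.add_re]
    congr 1
    simp only [Prod.fst_add, Prod.snd_add, Pi.add_apply, map_add, add_mul, Finset.sum_add_distrib]
    ring
  smul_mem' := by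
    intro r X hX z u
    have h1 := hX z u
    rw [← mul_zero r, ← h1, ← Complex.re_ofReal_mul]
    congr 1
    simp only [Prod.smul_fst, Prod.smul_snd, Pi.smul_apply, real_smul_eq, map_mul, eval_C,
      mul_sub, Finset.mul_sum]
    congr 1
    · ring
    · exact Finset.sum_congr rfl fun j _ => by ring

lemma span_gSet (P Q R : MvPolynomial (Fin 3) ℂ) : Submodule.span ℝ (gSet P Q R) = gSub P Q R :=
  Submodule.span_eq (gSub P Q R)

section structure_lemmas

variable {c : Fin 3 → ℂ} {e : Fin 3 → Fin 3 → ℕ} {F : Fin 3 → MvPolynomial (Fin 4) ℂ}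
  {G : MvPolynomial (Fin 4) ℂ}

lemma X_mul_pderiv_mm (j a : Fin 3) :
    X j * pderiv j (mm c e a) = C (e a j : ℂ) * mm c e a := by
  rw [mm_eq_monomial, X_mul_pderiv_monomial, nsmul_eq_mul]
  simp

/-- A vector field annihilating three independent monomials vanishes. -/
lemma eq_zero_of_sum_pderiv_eq_zero (hc : ∀ a, c a ≠ 0) (hdet : (expMat e).det ≠ 0)
    {f : Fin 3 → MvPolynomial (Fin 3) ℂ} (h : ∀ a, ∑ j, f j * pderiv j (mm c e a) = 0) :
    f = 0 := by
  funext j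
  have hX : f j * ∏ i, X i = 0 := by
    refine MvPolynomial.funext fun z => ?_
    simp only [map_mul, map_prod, eval_X, map_zero, mul_eq_zero]
    by_cases hz : ∀ i, z i ≠ 0
    · left
      have hv := exp_dual hdet (fun j => eval z (f j) / z j) (fun a => by
        have h1 := congrArg (eval z) (h a)
        have h2 : ∀ j, z j * eval z (pderiv j (mm c e a)) = e a j * eval z (mm c e a) := fun j => by
          simpa using congrArg (eval z) (X_mul_pderiv_mm (c := c) (e := e) j a)
        have h3 : eval z (mm c e a) ≠ 0 := by
          rw [mm, eval_mon]
          exact mul_ne_zero (hc a) (Finset.prod_ne_zero_iff.mpr fun i _ => pow_ne_zero _ (hz i))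
        refine mul_right_cancel₀ h3 ?_
        rw [zero_mul, Finset.sum_mul]
        rw [map_zero, map_sum] at h1
        rw [← h1]
        refine Finset.sum_congr rfl fun j _ => ?_
        rw [map_mul, mul_right_comm, ← h2 j]
        have := hz j
        field_simp)
      have := congrFun hv j
      simpa [hz j] using this
    · right
      push Not at hz
      obtain ⟨i, hi⟩ := hz
      exact Finset.prod_eq_zero (Finset.mem_univ i) hi
  rcases mul_eq_zero.mp hX with h1 | h1
  · exact h1
  · exact absurd h1 (Finset.prod_ne_zero_iff.mpr fun i _ => X_ne_zero i)

lemma eq_zero_of_push_eq_zero (hc : ∀ a, c a ≠ 0) (hdet : (expMat e).det ≠ 0)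
    (h : ∀ z w a, ev z w (push F (mm c e a)) = 0) : F = 0 := by
  have h1 : ∀ w, (fun j => specW w (F j)) = 0 := fun w =>
    eq_zero_of_sum_pderiv_eq_zero hc hdet fun a => MvPolynomial.funext fun z => by
      rw [← specW_push, eval_specW, h, map_zero]
  funext j
  refine eq_of_ev_eq fun z w => ?_
  rw [← eval_specW, congrFun (h1 w) j]
  simp

/-- The converse of `IsCR.isNormal`. -/
theorem IsNormal.isCR {g0 g1 g2 : ℝ} {M : Fin 3 → Fin 3 → ℂ} (h : IsNormal c e F G g0 g1 g2 M) :
    IsCR c e F G := by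
  obtain ⟨hG, hF, hM⟩ := h
  intro z u
  have hM' : ∀ a b, conj (M a b) = (if a = b then (g1 : ℂ) else 0) - M (sw b) (sw a) := by
    intro a b
    have := hM (sw b) (sw a)
    rw [sw_sw, sw_sw] at this
    have h2 : (sw b = sw a) = (a = b) := by
      fin_cases a <;> fin_cases b <;> simp [sw]
    simp only [h2] at this
    linear_combination this
  have key : ∀ x : ℂ, x + conj x = 0 → x.re = 0 := by
    intro x hx
    have := congrArg Complex.re hx
    simp at this
    linarith
  have h1 := sum_ev_mul_PhiD (mm c e 0) (mm c e 1) (mm c e 2) F z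
    (u + I * Phi (mm c e 0) (mm c e 1) (mm c e 2) z)
  change (ev z (u + I * Phi (mm c e 0) (mm c e 1) (mm c e 2) z) G / (2 * I) -
    ∑ j, ev z (u + I * Phi (mm c e 0) (mm c e 1) (mm c e 2) z) (F j) *
      PhiD (mm c e 0) (mm c e 1) (mm c e 2) j z).re = 0
  rw [h1]
  apply key
  simp only [hG, hF, Fin.sum_univ_three, map_sub, map_add, map_mul, map_div₀, map_pow, conj_ofReal,
    conj_I, conj_conj, hM', sw, Phi, map_ofNat, Matrix.cons_val]
  simp only [Fin.isValue, if_true, Fin.reduceEq, if_false]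
  field_simp
  ring

lemma IsNormal.specW_push_eq {g0 g1 g2 : ℝ} {M : Fin 3 → Fin 3 → ℂ}
    (h : IsNormal c e F G g0 g1 g2 M) (a : Fin 3) :
    ∑ j, specW 0 (F j) * pderiv j (mm c e a) = ∑ b, C (M a b) * mm c e b := by
  refine MvPolynomial.funext fun z => ?_
  rw [← specW_push, eval_specW, h.2.1]
  simp

lemma monExp_injective (hdet : (expMat e).det ≠ 0) {a b : Fin 3}
    (h : monExp (e a) = monExp (e b)) : a = b := by
  by_contra hab
  have := congrFun (exp_indep hdet (Pi.single a 1 - Pi.single b 1) (fun j => by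
    have := DFunLike.congr_fun h j
    simp only [monExp_apply] at this
    simp [Pi.single_apply, sub_mul, this])) a
  simp [hab] at this

lemma coeff_sum_C_mul_mm (hdet : (expMat e).det ≠ 0) (m : Fin 3 → ℂ) (b : Fin 3) :
    coeff (monExp (e b)) (∑ b, C (m b) * mm c e b) = m b * c b := by
  simp only [coeff_sum, coeff_C_mul, mm_eq_monomial, coeff_monomial]
  rw [Finset.sum_eq_single b]
  · simp
  · intro d _ hd
    rw [if_neg fun h => hd (monExp_injective hdet h), mul_zero]
  · simp

variable (c e) in
/-- The matrix of a normal vector field, as a linear functional of the field. -/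
def matCoeff (a b : Fin 3) : VF →ₗ[ℝ] ℂ where
  toFun X := coeff (monExp (e b)) (specW 0 (push X.1 (mm c e a))) / c b
  map_add' X Y := by simp [push_add, add_div]
  map_smul' r X := by
    simp only [Prod.smul_fst, push_smul, real_smul_eq, map_mul, RingHom.id_apply, Complex.real_smul]
    simp only [← algebraMap_eq, AlgHom.commutes]
    rw [algebraMap_eq, coeff_C_mul, mul_div_assoc]

lemma IsNormal.matCoeff_eq {g0 g1 g2 : ℝ} {M : Fin 3 → Fin 3 → ℂ} (hc : ∀ a, c a ≠ 0)
    (hdet : (expMat e).det ≠ 0) (h : IsNormal c e F G g0 g1 g2 M) (a b : Fin 3) :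
    matCoeff c e a b (F, G) = M a b := by
  simp only [matCoeff, LinearMap.coe_mk, AddHom.coe_mk]
  rw [specW_push, h.specW_push_eq, coeff_sum_C_mul_mm hdet, mul_div_cancel_right₀ _ (hc b)]

/-- The value of the last component on the real axis, as a linear functional. -/
def valG (r : ℝ) : VF →ₗ[ℝ] ℝ where
  toFun X := (ev 0 r X.2).re
  map_add' X Y := by simp
  map_smul' s X := by simp [real_smul_eq, ev]

end structure_lemmas

section dimension_bounds

variable {c : Fin 3 → ℂ} {e : Fin 3 → Fin 3 → ℕ}

theorem rank_gSub_le_nine (hc : ∀ a, c a ≠ 0) (hdet : (expMat e).det ≠ 0)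
    (hn : ∀ F G, IsCR c e F G → ∃ g0 g1 g2 M, IsNormal c e F G g0 g1 g2 M)
    (l : VF →ₗ[ℝ] (Fin 3 → ℝ))
    (hl : ∀ F G g0 g1 g2 M, IsNormal c e F G g0 g1 g2 M → l (F, G) = 0 →
      M 0 1 = 0 ∧ M 1 0 = 0 ∧ M 0 2 = 0 ∧ M 1 2 = 0) :
    Module.rank ℝ (gSub (mm c e 0) (mm c e 1) (mm c e 2)) ≤ 9 := by
  let T : VF →ₗ[ℝ] (Fin 6 → ℝ) × (Fin 3 → ℝ) :=
    (LinearMap.pi ![valG 0, valG 1, valG (-1), Complex.reLm ∘ₗ matCoeff c e 0 0,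
      Complex.imLm ∘ₗ matCoeff c e 0 0, Complex.imLm ∘ₗ matCoeff c e 2 2]).prod l
  have hT : Function.Injective (T.domRestrict (gSub (mm c e 0) (mm c e 1) (mm c e 2))) := by
    rw [← LinearMap.ker_eq_bot, LinearMap.ker_eq_bot']
    rintro ⟨⟨F, G⟩, hX⟩ h0
    obtain ⟨g0, g1, g2, M, hN⟩ := hn F G hX
    have h1 := congrArg Prod.fst h0
    have hl0 : l (F, G) = 0 := congrArg Prod.snd h0
    have k0 := congrFun h1 0
    have k1 := congrFun h1 1
    have k2 := congrFun h1 2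
    have k3 := congrFun h1 3
    have k4 := congrFun h1 4
    have k5 := congrFun h1 5
    simp [T, valG, hN.1, hN.matCoeff_eq hc hdet] at k0 k1 k2 k3 k4 k5
    have hg0 : g0 = 0 := k0
    have hg1 : g1 = 0 := by linarith
    have hg2 : g2 = 0 := by linarith
    subst hg0 hg1 hg2
    obtain ⟨m01, m10, m02, m12⟩ := hl _ _ _ _ _ _ hN hl0
    have hM := hN.2.2
    have h00 := hM 0 0
    have h02 := hM 0 2
    have h12 := hM 1 2
    have h22 := hM 2 2
    have m00 : M 0 0 = 0 := Complex.ext k3 k4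
    simp [sw, m00, m02, m12] at h00 h02 h12
    have m22 : M 2 2 = 0 := by
      have := congrArg Complex.re h22
      simp [sw] at this
      exact Complex.ext this k5
    have hM0 : ∀ a b, M a b = 0 := by
      intro a b
      fin_cases a <;> fin_cases b <;> assumption
    have hF : F = 0 := eq_zero_of_push_eq_zero hc hdet fun z w a => by
      rw [hN.2.1]
      simp [hM0]
    have hG : G = 0 := eq_of_ev_eq fun z w => by
      rw [hN.1]
      simp
    simp [hF, hG]
  refine (LinearMap.rank_le_of_injective _ hT).trans ?_
  rw [rank_prod', rank_fin_fun, rank_fin_fun]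
  norm_num

/-- The linear vector field with matrix `A`. -/
def linVF (A : Fin 3 → Fin 3 → ℂ) (j : Fin 3) : MvPolynomial (Fin 3) ℂ := ∑ k, C (A j k) * X k

variable (e) in
/-- The vector field acting on each of the monomials as the identity. -/
def eulerVF (j : Fin 3) : MvPolynomial (Fin 3) ℂ :=
  C (((expMat e)⁻¹.mulVec fun _ => 1) j) * X j

lemma sum_diag_mul_pderiv (m : Fin 3 → ℂ) (hdet : (expMat e).det ≠ 0) (a : Fin 3) :
    ∑ j, C (((expMat e)⁻¹.mulVec m) j) * X j * pderiv j (mm c e a) = C (m a) * mm c e a := by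
  have h1 : (expMat e).mulVec ((expMat e)⁻¹.mulVec m) = m := by
    rw [Matrix.mulVec_mulVec, Matrix.mul_nonsing_inv _ (isUnit_iff_ne_zero.mpr hdet),
      Matrix.one_mulVec]
  have h2 := congrFun h1 a
  simp only [Matrix.mulVec, dotProduct, expMat, Matrix.of_apply] at h2
  simp only [mul_assoc, X_mul_pderiv_mm]
  simp only [← mul_assoc, ← Finset.sum_mul, ← C_mul, ← map_sum]
  rw [← h2]
  congr 2
  exact Finset.sum_congr rfl fun j _ => mul_comm _ _

variable (e) in
/-- The vector field with linear part `A` and real parameters `g`. -/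
def normalVF (A : Fin 3 → Fin 3 → ℂ) (g : Fin 3 → ℝ) : VF :=
  (fun j => rename Fin.castSucc (linVF A j) +
      C (g 2 : ℂ) * ((X 3 : MvPolynomial (Fin 4) ℂ) * rename Fin.castSucc (eulerVF e j)),
    C (g 0 : ℂ) + C (g 1 : ℂ) * X 3 + C (g 2 : ℂ) * X 3 ^ 2)

lemma ev_X_last (z : Fin 3 → ℂ) (w : ℂ) : ev z w (X 3) = w := by
  rw [ev, eval_X]
  exact Fin.snoc_last (α := fun _ => ℂ) w z

lemma normalVF_isNormal (hdet : (expMat e).det ≠ 0) {A M : Fin 3 → Fin 3 → ℂ} {g : Fin 3 → ℝ}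
    (hA : ∀ a, ∑ j, linVF A j * pderiv j (mm c e a) = ∑ b, C (M a b) * mm c e b)
    (hM : ∀ a b, M a b + conj (M (sw b) (sw a)) = if a = b then (g 1 : ℂ) else 0) :
    IsNormal c e (normalVF e A g).1 (normalVF e A g).2 (g 0) (g 1) (g 2) M := by
  refine ⟨fun z w => ?_, fun z w a => ?_, hM⟩
  · simp only [normalVF, map_add, map_mul, map_pow, ev_X_last]
    simp [ev]
  · have h1 := congrArg (eval z) (sum_diag_mul_pderiv (c := c) (fun _ => 1) hdet a)
    have h2 := congrArg (eval z) (hA a)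
    have h3 : ∀ x, ev z w (C x) = x := fun x => by simp [ev]
    simp only [map_sum, map_mul, eval_C, map_one, one_mul] at h1 h2
    simp only [push, normalVF, map_sum, map_mul, map_add, ev_rename, add_mul,
      Finset.sum_add_distrib, h2, ev_X_last, eulerVF, h3, ← h1, Finset.mul_sum, eval_C]
    rw [add_comm]
    congr 1
    exact Finset.sum_congr rfl fun j _ => by ring

theorem le_rank_gSub {n : ℕ} (hc : ∀ a, c a ≠ 0) (hdet : (expMat e).det ≠ 0)
    (A : (Fin n → ℝ) →ₗ[ℝ] (Fin 3 → Fin 3 → ℂ)) (g : (Fin n → ℝ) →ₗ[ℝ] (Fin 3 → ℝ))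
    (M : (Fin n → ℝ) → Fin 3 → Fin 3 → ℂ)
    (hA : ∀ x a, ∑ j, linVF (A x) j * pderiv j (mm c e a) = ∑ b, C (M x a b) * mm c e b)
    (hM : ∀ x a b, M x a b + conj (M x (sw b) (sw a)) = if a = b then (g x 1 : ℂ) else 0)
    (hinj : ∀ x, g x = 0 → (∀ a b, M x a b = 0) → x = 0) :
    n ≤ Module.rank ℝ (gSub (mm c e 0) (mm c e 1) (mm c e 2)) := by
  let T : (Fin n → ℝ) →ₗ[ℝ] gSub (mm c e 0) (mm c e 1) (mm c e 2) :=
    LinearMap.codRestrict _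
      { toFun := fun x => normalVF e (A x) (g x)
        map_add' := fun x y => by
          ext1
          · funext j
            simp only [normalVF, linVF, Prod.fst_add, Pi.add_apply, map_add, map_sum, add_mul,
              Finset.sum_add_distrib, Complex.ofReal_add]
            ring
          · simp only [normalVF, Prod.snd_add, map_add, Pi.add_apply, Complex.ofReal_add]
            ring
        map_smul' := fun r x => by
          ext1
          · funext j
            simp only [normalVF, linVF, Prod.smul_fst, Pi.smul_apply, map_smul, real_smul_eq,
              Complex.real_smul, smul_eq_mul, Complex.ofReal_mul, map_sum, map_mul,
              RingHom.id_apply, mul_add, Finset.mul_sum, rename_C]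
            simp only [mul_assoc]
          · simp only [normalVF, Prod.smul_snd, map_smul, Pi.smul_apply, smul_eq_mul,
              Complex.ofReal_mul, C_mul, RingHom.id_apply, real_smul_eq]
            ring }
      fun x => (normalVF_isNormal hdet (hA x) (hM x)).isCR
  have hT : Function.Injective T := by
    rw [← LinearMap.ker_eq_bot, LinearMap.ker_eq_bot']
    intro x hx
    have h0 : normalVF e (A x) (g x) = 0 := congrArg Subtype.val hx
    have hN := normalVF_isNormal (c := c) hdet (hA x) (hM x)
    have hG := hN.1 0
    simp only [h0, Prod.snd_zero, map_zero] at hG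
    refine hinj x ?_ fun a b => ?_
    · have k0 := hG 0
      have k1 := hG 1
      have k2 := hG (-1)
      norm_num at k0 k1 k2
      norm_cast at k0 k1 k2
      funext i
      fin_cases i
      · exact k0.symm
      · show g x 1 = 0
        linarith
      · show g x 2 = 0
        linarith
    · rw [← hN.matCoeff_eq hc hdet]
      change matCoeff c e a b (normalVF e (A x) (g x)) = 0
      rw [h0, map_zero]
  have := LinearMap.rank_le_of_injective T hT
  rwa [rank_fin_fun] at this

lemma six_le_rank_gSub (hc : ∀ a, c a ≠ 0) (hdet : (expMat e).det ≠ 0) :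
    6 ≤ Module.rank ℝ (gSub (mm c e 0) (mm c e 1) (mm c e 2)) := by
  let m : (Fin 6 → ℝ) → Fin 3 → ℂ := fun x =>
    ![x 1 / 2 + x 3 + x 4 * I, x 1 / 2 - x 3 + x 4 * I, x 1 / 2 + x 5 * I]
  have madd : ∀ x y, m (x + y) = m x + m y := by
    intro x y
    ext a
    fin_cases a <;> simp [m] <;> ring
  have msmul : ∀ (r : ℝ) x, m (r • x) = (r : ℂ) • m x := by
    intro r y
    ext a
    fin_cases a <;> simp [m] <;> ring
  let A : (Fin 6 → ℝ) →ₗ[ℝ] (Fin 3 → Fin 3 → ℂ) :=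
    { toFun := fun x j k => if j = k then ((expMat e)⁻¹.mulVec (m x)) j else 0
      map_add' := fun x y => by
        funext j k
        simp only [madd, Matrix.mulVec_add, Pi.add_apply]
        split_ifs <;> simp
      map_smul' := fun r x => by
        funext j k
        simp only [msmul, Matrix.mulVec_smul, Pi.smul_apply, RingHom.id_apply]
        split_ifs <;> simp }
  let g : (Fin 6 → ℝ) →ₗ[ℝ] (Fin 3 → ℝ) :=
    LinearMap.pi ![LinearMap.proj 0, LinearMap.proj 1, LinearMap.proj 2]
  have := le_rank_gSub (n := 6) hc hdet A g (fun x a b => if a = b then m x a else 0) ?_ ?_ ?_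
  · exact_mod_cast this
  · intro x a
    have h1 : ∀ j, linVF (A x) j = C (((expMat e)⁻¹.mulVec (m x)) j) * X j := by
      intro j
      simp only [linVF, A, LinearMap.coe_mk, AddHom.coe_mk, apply_ite C, map_zero, ite_mul,
        zero_mul, Finset.sum_ite_eq, Finset.mem_univ, if_true]
    simp only [h1, sum_diag_mul_pderiv (m x) hdet]
    simp only [apply_ite C, map_zero, ite_mul, zero_mul, Finset.sum_ite_eq, Finset.mem_univ,
      if_true]
  · intro x a b
    fin_cases a <;> fin_cases b <;> simp [sw, m, g, map_ofNat (starRingEnd ℂ)] <;> ring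
  · intro x hg hM
    have g0 := congrFun hg 0
    have g1 := congrFun hg 1
    have g2 := congrFun hg 2
    have m0 := hM 0 0
    have m2 := hM 2 2
    simp [g] at g0 g1 g2
    simp [m, g1] at m0 m2
    have m0r := congrArg Complex.re m0
    have m0i := congrArg Complex.im m0
    simp at m0r m0i
    funext i
    fin_cases i <;> assumption

end dimension_bounds

section rigid_fields

variable {c : Fin 3 → ℂ} {e : Fin 3 → Fin 3 → ℕ}

/-- The rigid vector field `f` acts linearly on the monomials, with matrix `M`. -/
def ActsBy (c : Fin 3 → ℂ) (e : Fin 3 → Fin 3 → ℕ) (f : Fin 3 → MvPolynomial (Fin 3) ℂ)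
    (M : Fin 3 → Fin 3 → ℂ) : Prop :=
  ∀ a, ∑ j, f j * pderiv j (mm c e a) = ∑ b, C (M a b) * mm c e b

lemma degree_monExp (x : Fin 3 → ℕ) : (monExp x).degree = degE x := by
  simp [Finsupp.degree_eq_sum, Fin.sum_univ_three, degE]

lemma degree_monExp_tsub {x : Fin 3 → ℕ} {k : Fin 3} (hk : 0 < x k) :
    (monExp x - Finsupp.single k 1).degree + 1 = degE x := by
  have h1 : monExp x - Finsupp.single k 1 + Finsupp.single k 1 = monExp x := by
    apply tsub_add_cancel_of_le
    intro i
    rw [Finsupp.single_apply]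
    split_ifs with h
    · subst h; exact hk
    · exact Nat.zero_le _
  rw [← degree_monExp, ← h1, map_add]
  simp

lemma exists_eq_single_of_degree_eq_one {n : Fin 3 →₀ ℕ} (h : n.degree = 1) :
    ∃ l, n = Finsupp.single l 1 := by
  rw [Finsupp.degree_eq_sum, Fin.sum_univ_three] at h
  obtain h1 | h1 | h1 : n 0 = 1 ∨ n 1 = 1 ∨ n 2 = 1 := by omega
  · refine ⟨0, Finsupp.ext fun i => ?_⟩
    fin_cases i <;> simp <;> omega
  · refine ⟨1, Finsupp.ext fun i => ?_⟩
    fin_cases i <;> simp <;> omega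
  · refine ⟨2, Finsupp.ext fun i => ?_⟩
    fin_cases i <;> simp <;> omega

lemma coeff_sum_homogeneousComponent (f : Fin 3 → MvPolynomial (Fin 3) ℂ) (s : ℕ) (a : Fin 3)
    (m : Fin 3 →₀ ℕ) :
    coeff m (∑ j, homogeneousComponent s (f j) * pderiv j (mm c e a)) =
      if m.degree + 1 = s + degE (e a) then coeff m (∑ j, f j * pderiv j (mm c e a)) else 0 := by
  simp only [mm, coeff_sum_mul_pderiv_mon]
  split_ifs with hs
  · refine Finset.sum_congr rfl fun j _ => ?_
    split_ifs with hle
    · rcases Nat.eq_zero_or_pos (e a j) with h0 | h0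
      · simp [h0]
      · have h1 := congrArg Finsupp.degree (add_tsub_cancel_of_le hle)
        have h2 := degree_monExp_tsub h0
        rw [map_add] at h1
        rw [coeff_homogeneousComponent, if_pos (by omega)]
    · rfl
  · refine Finset.sum_eq_zero fun j _ => ?_
    split_ifs with hle
    · rcases Nat.eq_zero_or_pos (e a j) with h0 | h0
      · simp [h0]
      · have h1 := congrArg Finsupp.degree (add_tsub_cancel_of_le hle)
        have h2 := degree_monExp_tsub h0
        rw [map_add] at h1
        rw [coeff_homogeneousComponent, if_neg (by omega), zero_mul]
    · rfl

lemma ActsBy.homogeneousComponent {f : Fin 3 → MvPolynomial (Fin 3) ℂ} {M : Fin 3 → Fin 3 → ℂ}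
    (h : ActsBy c e f M) (s : ℕ) :
    ActsBy c e (fun j => MvPolynomial.homogeneousComponent s (f j))
      (fun a b => if degE (e b) + 1 = s + degE (e a) then M a b else 0) := by
  intro a
  ext m
  rw [coeff_sum_homogeneousComponent, h a]
  simp only [coeff_sum, coeff_C_mul, mm_eq_monomial, coeff_monomial]
  split_ifs with hm
  · refine Finset.sum_congr rfl fun b _ => ?_
    by_cases hb : monExp (e b) = m
    · rw [← hb, degree_monExp] at hm
      simp [hm]
    · simp [hb]
  · symm
    refine Finset.sum_eq_zero fun b _ => ?_
    by_cases hb : monExp (e b) = m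
    · rw [← hb, degree_monExp] at hm
      simp [hm]
    · simp [hb]

lemma ActsBy.eq_zero {M : Fin 3 → Fin 3 → ℂ} (hc : ∀ a, c a ≠ 0) (hdet : (expMat e).det ≠ 0)
    (h : ActsBy c e 0 M) (a b : Fin 3) : M a b = 0 := by
  have := congrArg (coeff (monExp (e b))) (h a)
  rw [coeff_sum_C_mul_mm hdet] at this
  simpa [hc b] using this

lemma ActsBy.mem_gcSet {f : Fin 3 → MvPolynomial (Fin 3) ℂ} {M : Fin 3 → Fin 3 → ℂ} {d : ℕ}
    (h : ActsBy c e f M) (hM : ∀ a b, M a b + conj (M (sw b) (sw a)) = 0)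
    (hf : ∀ j, ∀ m ∈ (f j).support, 2 ≤ m.degree ∧ m.degree ≤ d) :
    f ∈ gcSet (mm c e 0) (mm c e 1) (mm c e 2) d := by
  refine ⟨hf, fun z => ?_⟩
  have hN : IsNormal c e (fun j => rename Fin.castSucc (f j)) 0 0 0 0 M := by
    refine ⟨fun z w => by simp, fun z w a => ?_, fun a b => by simp [hM a b]⟩
    have := congrArg (eval z) (h a)
    simpa [push, ev_rename] using this
  have := hN.isCR z 0
  change (ev z _ 0 / (2 * I) - ∑ j, ev z _ (rename Fin.castSucc (f j)) * _).re = 0 at this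
  simp only [map_zero, zero_div, zero_sub, Complex.neg_re, neg_eq_zero, ev_rename] at this
  exact this

lemma ActsBy.exists_of_ne_zero {f : Fin 3 → MvPolynomial (Fin 3) ℂ} {M : Fin 3 → Fin 3 → ℂ}
    (hc : ∀ a, c a ≠ 0) (hdet : (expMat e).det ≠ 0) (h : ActsBy c e f M) {a b : Fin 3}
    (hab : M a b ≠ 0) : ∃ k n, 0 < e a k ∧ monExp (e b) = monExp (e a) - Finsupp.single k 1 + n ∧
      coeff n (f k) ≠ 0 ∧ degE (e b) + 1 = degE (e a) + n.degree := by
  have h1 := congrArg (coeff (monExp (e b))) (h a)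
  rw [coeff_sum_C_mul_mm hdet] at h1
  obtain ⟨k, n, hk, hn, hf⟩ := exists_of_coeff_sum_mul_pderiv_mon_ne_zero
    (h1.trans_ne (mul_ne_zero hab (hc b)))
  refine ⟨k, n, hk, hn, hf, ?_⟩
  rw [← degree_monExp, hn, map_add, ← degree_monExp_tsub hk]
  ring

lemma ActsBy.exists_monExp_eq {f : Fin 3 → MvPolynomial (Fin 3) ℂ} {M : Fin 3 → Fin 3 → ℂ}
    (hc : ∀ a, c a ≠ 0) (h : ActsBy c e f M) {a k : Fin 3} {n : Fin 3 →₀ ℕ}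
    (hk : 0 < e a k) (hn : n k = 0) (hf : coeff n (f k) ≠ 0) :
    ∃ d, monExp (e d) = monExp (e a) - Finsupp.single k 1 + n := by
  by_contra! hd
  have h1 := congrArg (coeff (monExp (e a) - Finsupp.single k 1 + n)) (h a)
  rw [mm, coeff_sum_mul_pderiv_mon_of_eq_zero _ _ _ _ _ hk hn] at h1
  simp only [coeff_sum, coeff_C_mul, mm_eq_monomial, coeff_monomial, hd, if_false, mul_zero,
    Finset.sum_const_zero] at h1
  refine mul_ne_zero hf (mul_ne_zero (hc a) ?_) h1
  exact_mod_cast hk.ne'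

/-- If all the monomials have the same degree, an off-diagonal action on a monomial produces
a variable which is specific to that monomial. -/
lemma ActsBy.exists_variable {f : Fin 3 → MvPolynomial (Fin 3) ℂ} {M : Fin 3 → Fin 3 → ℂ}
    (hc : ∀ a, c a ≠ 0) (hdet : (expMat e).det ≠ 0) (hdeg : ∀ a b, degE (e a) = degE (e b))
    (h : ActsBy c e f M) {a b : Fin 3} (hne : a ≠ b) (hab : M a b ≠ 0) :
    ∃ k, e a k = 1 ∧ ∀ d, d ≠ a → e d k = 0 := by
  obtain ⟨k, n, hk, hn, hf, hd⟩ := h.exists_of_ne_zero hc hdet hab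
  rw [hdeg b a] at hd
  have hn1 : n.degree = 1 := by omega
  obtain ⟨l, rfl⟩ := exists_eq_single_of_degree_eq_one hn1
  have hexp : ∀ i, (e b i : ℤ) = e a i - (if k = i then 1 else 0) + if l = i then 1 else 0 := by
    intro i
    have := DFunLike.congr_fun hn i
    simp only [monExp_apply, Finsupp.add_apply, Finsupp.tsub_apply, Finsupp.single_apply] at this
    have hk' : k = i → 0 < e a i := by rintro rfl; exact hk
    split_ifs at this ⊢ <;> simp_all
  have hlk : l ≠ k := by
    rintro rfl
    refine hne (monExp_injective hdet ?_)
    ext i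
    have := hexp i
    simp only [monExp_apply]
    omega
  have hz : ∀ d, d ≠ a → e d k = 0 := by
    intro d hda
    by_contra hdk
    have hdk' := Nat.pos_of_ne_zero hdk
    obtain ⟨d', hd'⟩ := h.exists_monExp_eq hc hdk' (by simp [hlk]) hf
    have hexp' : ∀ i, (e d' i : ℤ) = e d i - (if k = i then 1 else 0) +
        if l = i then 1 else 0 := by
      intro i
      have := DFunLike.congr_fun hd' i
      simp only [monExp_apply, Finsupp.add_apply, Finsupp.tsub_apply,
        Finsupp.single_apply] at this
      have hk' : k = i → 0 < e d i := by rintro rfl; exact hdk'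
      split_ifs at this ⊢ <;> simp_all
    have h5 := exp_indep hdet (Pi.single d 1 + Pi.single b 1 - Pi.single a 1 - Pi.single d' 1)
      (fun i => by
        simp [Pi.single_apply, add_mul, sub_mul, Finset.sum_add_distrib, hexp', hexp]
        ring)
    have h6 := congrFun h5 a
    simp [Pi.single_apply, hda.symm, hne] at h6
    split_ifs at h6 <;> simp at h6
  refine ⟨k, ?_, hz⟩
  have h1 := hexp k
  have h2 := hz b hne.symm
  simp [h2, hlk] at h1
  omega

lemma IsNormal.actsBy {F : Fin 3 → MvPolynomial (Fin 4) ℂ} {G : MvPolynomial (Fin 4) ℂ}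
    {g0 g1 g2 : ℝ} {M : Fin 3 → Fin 3 → ℂ} (h : IsNormal c e F G g0 g1 g2 M) :
    ActsBy c e (fun j => specW 0 (F j)) M := h.specW_push_eq

/-- The upper bound when the three monomials have the same degree. -/
theorem rank_gSub_le_nine_of_degE_eq (hc : ∀ a, c a ≠ 0) (hdet : (expMat e).det ≠ 0)
    (hdeg : ∀ a b, degE (e a) = degE (e b)) (h2 : 2 ≤ degE (e 0)) :
    Module.rank ℝ (gSub (mm c e 0) (mm c e 1) (mm c e 2)) ≤ 9 := by
  have hn : ∀ F G, IsCR c e F G → ∃ g0 g1 g2 M, IsNormal c e F G g0 g1 g2 M := fun F G h =>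
    h.isNormal hc hdet fun a τ => ev_zero_push_mon F _ _ (by rw [hdeg a 0]; exact h2) τ
  let row : Fin 3 → Prop := fun a => ∃ f M b, ActsBy c e f M ∧ a ≠ b ∧ M a b ≠ 0
  have hrow : ¬ ∀ a, row a := by
    intro hr
    choose f M b hf hab hM using hr
    choose k hk1 hk0 using fun a => (hf a).exists_variable hc hdet hdeg (hab a) (hM a)
    have hinj : Function.Injective k := by
      intro a a' haa
      by_contra hne
      have h1 := hk0 a' a hne
      rw [← haa, hk1] at h1
      exact one_ne_zero h1
    have hsum : ∑ i, e 0 i = ∑ a, e 0 (k a) :=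
      (Equiv.sum_comp (Equiv.ofBijective k (Finite.injective_iff_bijective.mp hinj)) (e 0)).symm
    rw [Fin.sum_univ_three, Fin.sum_univ_three, hk1 0, hk0 1 0 (by decide),
      hk0 2 0 (by decide)] at hsum
    unfold degE at h2
    omega
  have hrow' : ∀ {F G g0 g1 g2 M a b}, IsNormal c e F G g0 g1 g2 M → ¬ row a → a ≠ b →
      M a b = 0 := by
    intro F G g0 g1 g2 M a b hN hr hab
    by_contra hM
    exact hr ⟨_, M, b, hN.actsBy, hab, hM⟩
  have him : ∀ x : ℂ, x + conj x = 0 → x.im = 0 → x = 0 := by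
    intro x h1 h2
    have := congrArg Complex.re h1
    simp at this
    exact Complex.ext this h2
  by_cases h1 : row 1
  · by_cases h0 : row 0
    · have h2 : ¬ row 2 := fun h2 => hrow (by
        intro a
        fin_cases a <;> assumption)
      refine rank_gSub_le_nine hc hdet hn (LinearMap.pi ![Complex.imLm ∘ₗ matCoeff c e 0 1,
        Complex.imLm ∘ₗ matCoeff c e 1 0, 0]) fun F G g0 g1 g2 M hN hl => ?_
      have k0 := congrFun hl 0
      have k1 := congrFun hl 1
      have h01 := hN.2.2 0 1
      have h10 := hN.2.2 1 0
      have h02 := hN.2.2 0 2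
      have h12 := hN.2.2 1 2
      simp [hN.matCoeff_eq hc hdet] at k0 k1
      simp [sw] at h01 h10 h02 h12
      rw [hrow' hN h2 (by decide)] at h02 h12
      exact ⟨him _ h01 k0, him _ h10 k1, by simpa using h02, by simpa using h12⟩
    · refine rank_gSub_le_nine hc hdet hn (LinearMap.pi ![Complex.imLm ∘ₗ matCoeff c e 1 0,
        Complex.reLm ∘ₗ matCoeff c e 1 2, Complex.imLm ∘ₗ matCoeff c e 1 2])
        fun F G g0 g1 g2 M hN hl => ?_
      have k0 := congrFun hl 0
      have k1 := congrFun hl 1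
      have k2 := congrFun hl 2
      have h10 := hN.2.2 1 0
      simp [hN.matCoeff_eq hc hdet] at k0 k1 k2
      simp [sw] at h10
      exact ⟨hrow' hN h0 (by decide), him _ h10 k0, hrow' hN h0 (by decide), Complex.ext k1 k2⟩
  · refine rank_gSub_le_nine hc hdet hn (LinearMap.pi ![Complex.imLm ∘ₗ matCoeff c e 0 1,
      Complex.reLm ∘ₗ matCoeff c e 0 2, Complex.imLm ∘ₗ matCoeff c e 0 2])
      fun F G g0 g1 g2 M hN hl => ?_
    have k0 := congrFun hl 0
    have k1 := congrFun hl 1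
    have k2 := congrFun hl 2
    have h01 := hN.2.2 0 1
    simp [hN.matCoeff_eq hc hdet] at k0 k1 k2
    simp [sw] at h01
    exact ⟨him _ h01 k0, hrow' hN h1 (by decide), Complex.ext k1 k2, hrow' hN h1 (by decide)⟩

/-- If `g_c = 0`, a normal vector field does not raise the degrees of the monomials. -/
lemma IsNormal.eq_zero_of_degE_lt {F : Fin 3 → MvPolynomial (Fin 4) ℂ}
    {G : MvPolynomial (Fin 4) ℂ} {g0 g1 g2 : ℝ} {M : Fin 3 → Fin 3 → ℂ}
    (hc : ∀ a, c a ≠ 0) (hdet : (expMat e).det ≠ 0)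
    (hdeg : ∀ a, degE (e a) + degE (e (sw a)) = degE (e 0) + degE (e 1))
    (hgc : ∀ f ∈ gcSet (mm c e 0) (mm c e 1) (mm c e 2) (degE (e 0) + degE (e 1)), f = 0)
    (h : IsNormal c e F G g0 g1 g2 M) {a b : Fin 3} (hab : degE (e a) < degE (e b)) :
    M a b = 0 := by
  have hA := h.actsBy.homogeneousComponent (degE (e b) + 1 - degE (e a))
  have hmem := hA.mem_gcSet (d := degE (e 0) + degE (e 1)) ?_ ?_
  · have h0 := hgc _ hmem
    rw [h0] at hA
    have := hA.eq_zero hc hdet a b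
    rwa [if_pos (by omega)] at this
  · intro x y
    have h1 := h.2.2 x y
    have hx := hdeg x
    have hy := hdeg y
    by_cases hs : degE (e y) + 1 = degE (e b) + 1 - degE (e a) + degE (e x)
    · rw [if_pos hs, if_pos (by omega), h1, if_neg]
      rintro rfl
      omega
    · rw [if_neg hs, if_neg (by omega)]
      simp
  · intro j m hm
    have hm' : _ = m.degree := (homogeneousComponent_isHomogeneous _ _).degree_eq_sum_deg_support hm
    have := hdeg b
    have := degE_pos hdet a
    have := degE_pos hdet (sw b)
    omega

/-- If `g_c = 0`, every CR automorphism has vanishing `z`-components of its action at the origin. -/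
lemma IsCR.ev_zero_push_eq_zero {F : Fin 3 → MvPolynomial (Fin 4) ℂ} {G : MvPolynomial (Fin 4) ℂ}
    (hc : ∀ a, c a ≠ 0) (hdet : (expMat e).det ≠ 0) (h1 : 2 ≤ degE (e 1)) (h2 : 2 ≤ degE (e 2))
    (hgc : ∀ f ∈ gcSet (mm c e 0) (mm c e 1) (mm c e 2) (degE (e 0) + degE (e 1)), f = 0)
    (h : IsCR c e F G) (a : Fin 3) (τ : ℂ) : ev 0 τ (push F (mm c e a)) = 0 := by
  by_cases ha : 2 ≤ degE (e a)
  · exact ev_zero_push_mon F _ _ ha τ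
  obtain rfl : a = 0 := by
    fin_cases a
    · rfl
    · exact absurd h1 ha
    · exact absurd h2 ha
  have hd : (monExp (e 0)).degree = 1 := by
    rw [degree_monExp]
    have := degE_pos hdet 0
    omega
  obtain ⟨j, hj⟩ := exists_eq_single_of_degree_eq_one hd
  have he : e 0 = Pi.single j 1 := by
    funext i
    rw [← monExp_apply (e 0), hj, Finsupp.single_eq_pi_single]
  refine ev_zero_push_of_linear he τ ?_
  rcases Nat.eq_zero_or_pos (e 1 j) with hj1 | hj1
  swap
  · exact h.ev_zero_eq_zero hc hdet (by decide) he h1 hj1 τ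
  rcases Nat.eq_zero_or_pos (e 2 j) with hj2 | hj2
  swap
  · exact h.ev_zero_eq_zero hc hdet (by decide) he h2 hj2 τ
  exfalso
  let f : Fin 3 → MvPolynomial (Fin 3) ℂ := Pi.single j (C (I / c 0) * mm c e 1)
  have hA : ActsBy c e f (fun a b => if a = 0 ∧ b = 1 then I else 0) := by
    intro a
    rw [Finset.sum_eq_single j (by intro i _ hi; simp [f, hi]) (by simp)]
    fin_cases a
    · simp [f, mm_eq_monomial, pderiv_monomial, he, Fin.sum_univ_three]
      rw [← he, hj, tsub_self, C_mul_monomial, monomial_mul, add_zero, C_mul_monomial]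
      congr 1
      field_simp [hc 0]
    · simp [f, mm_eq_monomial, pderiv_monomial, hj1]
    · simp [f, mm_eq_monomial, pderiv_monomial, hj2]
  have hf := hgc f (hA.mem_gcSet ?_ ?_)
  · rw [hf] at hA
    have := hA.eq_zero hc hdet 0 1
    simp at this
  · intro x y
    fin_cases x <;> fin_cases y <;> simp [sw]
  · intro i m hm
    rcases eq_or_ne i j with rfl | hi
    · simp only [f, Pi.single_eq_same, mem_support_iff, coeff_C_mul, mm_eq_monomial,
        coeff_monomial] at hm
      have : monExp (e 1) = m := by
        by_contra hne
        simp [hne] at hm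
      rw [← this, degree_monExp]
      omega
    · simp [f, hi] at hm

/-- The upper bound when the degrees differ. -/
theorem rank_gSub_le_nine_of_degE_lt (hc : ∀ a, c a ≠ 0) (hdet : (expMat e).det ≠ 0)
    (hdeg : degE (e 0) + degE (e 1) = 2 * degE (e 2)) (h2 : 2 ≤ degE (e 2))
    (hlt : degE (e 0) < degE (e 1))
    (hgc : ∀ f ∈ gcSet (mm c e 0) (mm c e 1) (mm c e 2) (degE (e 0) + degE (e 1)), f = 0) :
    Module.rank ℝ (gSub (mm c e 0) (mm c e 1) (mm c e 2)) ≤ 9 := by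
  have hdeg' : ∀ a, degE (e a) + degE (e (sw a)) = degE (e 0) + degE (e 1) := by
    intro a
    fin_cases a <;> simp [sw] <;> omega
  refine rank_gSub_le_nine hc hdet (fun F G h => h.isNormal hc hdet
    (h.ev_zero_push_eq_zero hc hdet (by omega) h2 hgc)) 0 fun F G g0 g1 g2 M hN _ => ?_
  refine ⟨hN.eq_zero_of_degE_lt hc hdet hdeg' hgc hlt, ?_,
    hN.eq_zero_of_degE_lt hc hdet hdeg' hgc (by omega), ?_⟩
  · by_contra hM
    obtain ⟨k, n, -, -, -, hd⟩ := hN.actsBy.exists_of_ne_zero hc hdet hM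
    omega
  · by_contra hM
    have hM' : M 2 0 ≠ 0 := by
      intro h0
      have := hN.2.2 1 2
      simp [sw, h0] at this
      exact hM this
    obtain ⟨k, n, -, hk, -, hd⟩ := hN.actsBy.exists_of_ne_zero hc hdet hM
    obtain ⟨l, n', hl, hl', hf, hd'⟩ := hN.actsBy.exists_of_ne_zero hc hdet hM'
    obtain rfl : n = 0 := by rw [← Finsupp.degree_eq_zero_iff]; omega
    obtain rfl : n' = 0 := by rw [← Finsupp.degree_eq_zero_iff]; omega
    have hl1 : 0 < e 1 l := by
      have := DFunLike.congr_fun hk l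
      simp only [monExp_apply, Finsupp.add_apply, Finsupp.tsub_apply, Finsupp.coe_zero,
        Pi.zero_apply] at this
      omega
    obtain ⟨d, hd⟩ := hN.actsBy.exists_monExp_eq hc hl1 rfl hf
    have h5 := exp_indep hdet (Pi.single 1 1 + Pi.single 0 1 - Pi.single d 1 - Pi.single 2 1)
      (fun i => by
        have k1 := DFunLike.congr_fun hd i
        have k2 := DFunLike.congr_fun hl' i
        simp only [monExp_apply, Finsupp.add_apply, Finsupp.tsub_apply, Finsupp.single_apply,
          Finsupp.coe_zero, Pi.zero_apply] at k1 k2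
        have h3 : l = i → 0 < e 1 i ∧ 0 < e 2 i := by rintro rfl; exact ⟨hl1, hl⟩
        have h4 : (e 1 i : ℤ) + e 0 i - e d i - e 2 i = 0 := by
          split_ifs at k1 k2 with hli
          · have := h3 hli
            omega
          · omega
        simpa [Pi.single_apply, add_mul, sub_mul, Finset.sum_add_distrib] using h4)
    have h6 := congrFun h5 2
    simp [Pi.single_apply] at h6
    split_ifs at h6 <;> simp at h6

end rigid_fields

lemma expMat_det_ne_zero {e : Fin 3 → Fin 3 → ℕ} (h : edet (e 0) (e 1) (e 2) ≠ 0) :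
    (expMat e).det ≠ 0 := by
  rw [expMat_det]
  exact_mod_cast h

lemma gSet_swap (P Q R : MvPolynomial (Fin 3) ℂ) : gSet P Q R = gSet Q P R := by
  have h1 : Phi P Q R = Phi Q P R := by
    funext z
    simp only [Phi]
    ring
  have h2 : PhiD P Q R = PhiD Q P R := by
    funext j z
    simp only [PhiD]
    ring
  simp only [gSet, IsInfCR, h1, h2]

lemma gcSet_swap (P Q R : MvPolynomial (Fin 3) ℂ) (d : ℕ) : gcSet P Q R d = gcSet Q P R d := by
  have h2 : PhiD P Q R = PhiD Q P R := by
    funext j z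
    simp only [PhiD]
    ring
  simp only [gcSet, h2]

lemma edet_swap (a b g : Fin 3 → ℕ) : edet b a g = -edet a b g := by
  simp [edet, Matrix.det_fin_three]
  ring

lemma eq_zero_of_rank_span_eq_zero {V : Type*} [AddCommGroup V] [Module ℝ V] {s : Set V}
    (h : Module.rank ℝ (Submodule.span ℝ s) = 0) : ∀ f ∈ s, f = 0 :=
  Submodule.span_eq_bot.mp (Submodule.rank_eq_zero.mp h)

/-- The upper bound, assuming that the first monomial has the smaller degree. -/
lemma rank_span_gSet_le_nine_of_le {cP cQ cR : ℂ} {a b g : Fin 3 → ℕ} (hP : cP ≠ 0) (hQ : cQ ≠ 0)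
    (hR : cR ≠ 0) (hdeg : degE a + degE b = 2 * degE g) (h2 : 2 ≤ degE g) (hdet : edet a b g ≠ 0)
    (hgc : ∀ f ∈ gcSet (mon cP a) (mon cQ b) (mon cR g) (degE a + degE b), f = 0)
    (hle : degE a ≤ degE b) :
    Module.rank ℝ (Submodule.span ℝ (gSet (mon cP a) (mon cQ b) (mon cR g))) ≤ 9 := by
  have hc : ∀ i, ![cP, cQ, cR] i ≠ 0 := by
    intro i
    fin_cases i <;> assumption
  rw [span_gSet]
  rcases hle.lt_or_eq with hlt | heq
  · exact rank_gSub_le_nine_of_degE_lt (c := ![cP, cQ, cR]) (e := ![a, b, g]) hc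
      (expMat_det_ne_zero hdet) hdeg h2 hlt
      hgc
  · refine rank_gSub_le_nine_of_degE_eq (c := ![cP, cQ, cR]) (e := ![a, b, g]) hc
      (expMat_det_ne_zero hdet) ?_ ?_
    · intro i j
      fin_cases i <;> fin_cases j <;> simp <;> omega
    · simp
      omega

/-- The exponents of the model with `P = z₀ z₂`, `Q = z₂²`, `R = z₁ z₂`. -/
def quadExp : Fin 3 → Fin 3 → ℕ := ![![1, 0, 1], ![0, 0, 2], ![0, 1, 1]]

lemma edet_quadExp : edet (quadExp 0) (quadExp 1) (quadExp 2) ≠ 0 := by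
  simp [quadExp, edet, Matrix.det_fin_three]

lemma degE_quadExp (a : Fin 3) : degE (quadExp a) = 2 := by
  fin_cases a <;> rfl

lemma quadExp_gcSet_eq_zero {d : ℕ} : ∀ f ∈ gcSet (mm 1 quadExp 0) (mm 1 quadExp 1)
    (mm 1 quadExp 2) d, f = 0 := by
  rintro f ⟨hf, hre⟩
  have hc : ∀ a, (1 : Fin 3 → ℂ) a ≠ 0 := fun a => one_ne_zero
  have hdet := expMat_det_ne_zero edet_quadExp
  have hcr : IsCR 1 quadExp (fun j => rename Fin.castSucc (f j)) 0 := by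
    intro z u
    change (ev z _ 0 / (2 * I) - ∑ j, ev z _ (rename Fin.castSucc (f j)) * _).re = 0
    simp only [map_zero, zero_div, zero_sub, Complex.neg_re, neg_eq_zero, ev_rename]
    exact hre z
  obtain ⟨g0, g1, g2, M, hN⟩ := hcr.isNormal hc hdet fun a τ =>
    ev_zero_push_mon _ _ _ (degE_quadExp a).ge τ
  have hA : ActsBy 1 quadExp f M := by
    have := hN.actsBy
    simpa only [specW_rename] using this
  refine eq_zero_of_sum_pderiv_eq_zero hc hdet fun a => ?_
  rw [hA a]
  refine Finset.sum_eq_zero fun b _ => ?_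
  by_cases hab : M a b = 0
  · simp [hab]
  obtain ⟨k, n, -, -, hn, hd⟩ := hA.exists_of_ne_zero hc hdet hab
  have h1 : 2 ≤ n.degree := (hf k n (mem_support_iff.mpr hn)).1
  rw [degE_quadExp, degE_quadExp] at hd
  omega

/-- The matrices by which the stability algebra of the model acts on its monomials. -/
def quadMat (x : Fin 9 → ℝ) : Fin 3 → Fin 3 → ℂ :=
  ![![(x 1 / 2 : ℝ) + x 3 + x 4 * I, x 6 * I, x 7 + x 8 * I],
    ![0, (x 1 / 2 : ℝ) - x 3 + x 4 * I, 0],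
    ![0, -x 7 + x 8 * I, (x 1 / 2 : ℝ) + x 5 * I]]

/-- The linear vector fields realizing `quadMat`. -/
def quadLin : (Fin 9 → ℝ) →ₗ[ℝ] (Fin 3 → Fin 3 → ℂ) where
  toFun x := ![![quadMat x 0 0 - quadMat x 1 1 / 2, x 7 + x 8 * I, x 6 * I],
    ![0, quadMat x 2 2 - quadMat x 1 1 / 2, -x 7 + x 8 * I],
    ![0, 0, quadMat x 1 1 / 2]]
  map_add' x y := by
    funext i j
    fin_cases i <;> fin_cases j <;> simp [quadMat] <;> ring
  map_smul' r x := by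
    funext i j
    fin_cases i <;> fin_cases j <;> simp [quadMat] <;> ring

lemma sum_linVF_quadLin (x : Fin 9 → ℝ) (a : Fin 3) :
    ∑ j, linVF (quadLin x) j * pderiv j (mm 1 quadExp a) =
      ∑ b, C (quadMat x a b) * mm 1 quadExp b := by
  have h : ∀ y : ℂ, (C y : MvPolynomial (Fin 3) ℂ) = 2 * C (y / 2) := by
    intro y
    rw [show (2 : MvPolynomial (Fin 3) ℂ) = C 2 from rfl, ← C_mul]
    congr 1
    ring
  fin_cases a <;>
    simp [linVF, Fin.sum_univ_three, mm, mon, quadExp, quadLin, pderiv_X, Pi.single_apply]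
  · rw [show quadMat x 0 1 = x 6 * I from rfl, show quadMat x 0 2 = x 7 + x 8 * I from rfl, C_add,
      C_mul, C_mul]
    ring
  · rw [h (quadMat x 1 1), show quadMat x 1 0 = 0 from rfl, show quadMat x 1 2 = 0 from rfl, C_0]
    ring
  · rw [show quadMat x 2 0 = 0 from rfl, show quadMat x 2 1 = -x 7 + x 8 * I from rfl, C_0, C_add,
      C_neg, C_mul]
    ring

lemma nine_le_rank_gSub :
    9 ≤ Module.rank ℝ (gSub (mm 1 quadExp 0) (mm 1 quadExp 1) (mm 1 quadExp 2)) := by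
  refine le_rank_gSub (n := 9) (fun a => one_ne_zero) (expMat_det_ne_zero edet_quadExp) quadLin
    (LinearMap.pi ![LinearMap.proj 0, LinearMap.proj 1, LinearMap.proj 2]) quadMat
    sum_linVF_quadLin ?_ ?_
  · intro x a b
    apply Complex.ext <;> fin_cases a <;> fin_cases b <;>
      simp [quadMat, sw, -Complex.ofReal_div]
  · intro x hg hM
    have h0 := congrFun hg 0
    have h1 := congrFun hg 1
    have h2 := congrFun hg 2
    have m00 := hM 0 0
    have m01 := hM 0 1
    have m02 := hM 0 2
    have m22 := hM 2 2
    simp [quadMat, Complex.ext_iff] at h0 h1 h2 m00 m01 m02 m22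
    funext i
    fin_cases i <;> simp <;> grind

/-- For a holomorphically nondegenerate monomial model with
`deg R ≥ 2`: if `dim_ℝ g_c = 0` then `6 ≤ dim_ℝ g ≤ 9`; moreover some such model
attains `dim_ℝ g_c = 0` and `dim_ℝ g = 9`. -/
theorem stmt18 :
    (∀ (cP cQ cR : ℂ) (a b g : Fin 3 → ℕ),
      cP ≠ 0 → cQ ≠ 0 → cR ≠ 0 →
      degE a + degE b = 2 * degE g → 2 ≤ degE g → edet a b g ≠ 0 →
      Module.rank ℝ ↥(Submodule.span ℝ
          (gcSet (mon cP a) (mon cQ b) (mon cR g) (degE a + degE b))) = 0 →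
      (6 ≤ Module.rank ℝ ↥(Submodule.span ℝ (gSet (mon cP a) (mon cQ b) (mon cR g))) ∧
        Module.rank ℝ ↥(Submodule.span ℝ (gSet (mon cP a) (mon cQ b) (mon cR g))) ≤ 9)) ∧
    (∃ (cP cQ cR : ℂ) (a b g : Fin 3 → ℕ),
      cP ≠ 0 ∧ cQ ≠ 0 ∧ cR ≠ 0 ∧
      degE a + degE b = 2 * degE g ∧ 2 ≤ degE g ∧ edet a b g ≠ 0 ∧
      Module.rank ℝ ↥(Submodule.span ℝ
          (gcSet (mon cP a) (mon cQ b) (mon cR g) (degE a + degE b))) = 0 ∧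
      Module.rank ℝ ↥(Submodule.span ℝ (gSet (mon cP a) (mon cQ b) (mon cR g))) = 9) := by
  refine ⟨fun cP cQ cR a b g hP hQ hR hdeg h2 hdet hrank => ⟨?_, ?_⟩, 1, 1, 1, quadExp 0,
    quadExp 1, quadExp 2, one_ne_zero, one_ne_zero, one_ne_zero, rfl, le_rfl, edet_quadExp, ?_, ?_⟩
  · have hc : ∀ i, ![cP, cQ, cR] i ≠ 0 := by
      intro i
      fin_cases i <;> assumption
    rw [span_gSet]
    exact six_le_rank_gSub (c := ![cP, cQ, cR]) (e := ![a, b, g]) hc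
      (expMat_det_ne_zero hdet)
  · have hgc := eq_zero_of_rank_span_eq_zero hrank
    rcases le_total (degE a) (degE b) with hle | hle
    · exact rank_span_gSet_le_nine_of_le hP hQ hR hdeg h2 hdet hgc hle
    · rw [gSet_swap]
      rw [gcSet_swap, add_comm] at hgc
      refine rank_span_gSet_le_nine_of_le hQ hP hR (by omega) h2 ?_ hgc hle
      rwa [edet_swap, neg_ne_zero]
  · exact Submodule.rank_eq_zero.mpr (Submodule.span_eq_bot.mpr quadExp_gcSet_eq_zero)
  · rw [span_gSet]
    exact le_antisymm (rank_gSub_le_nine_of_degE_eq (c := 1) (fun a => one_ne_zero)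
      (expMat_det_ne_zero edet_quadExp) (fun a b => by simp [degE_quadExp])
      (degE_quadExp 0).ge) nine_le_rank_gSub
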